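/- arXiv:1903.02200 — 3 statements merged into one kernel-verified Lean document; each statement's English description precedes it below -/
import Mathlib

section
/- Let p(·): ℝⁿ → (1,∞) be measurable with 1 < p⁻ ≤ p⁺ < ∞ and let p'(·) be its pointwise conjugate, 1/p(x) + 1/p'(x) = 1. Then for every f ∈ L^{p(·)}(ℝⁿ), ‖f‖_{L^{p(·)}} ≤ sup { |∫_{ℝⁿ} f(x) g(x) dx| : g ∈ L^{p'(·)}(ℝⁿ), ‖g‖_{L^{p'(·)}} ≤ 1 } ≤ r_p ‖f‖_{L^{p(·)}}, where r_p = 1 + 1/p⁻ − 1/p⁺. -/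
/-!
Duality between `L^{p(·)}` and `L^{p'(·)}` with the constant
`r_p = 1 + 1/p⁻ - 1/p⁺`.

Upper bound. If the modulars of `f / l` and `g / m` are at most `1`, then Young's inequality with
the exponents `p x`, `p' x`, together with `1 / p x ≤ 1 / p⁻` and `1 / p' x ≤ 1 - 1 / p⁺`,
gives `∫ |f g| ≤ r_p l m` (`abs_integral_mul_le`). Letting `l` and `m` decrease to the
Luxemburg norms of `f` and `g` yields the bound, with no attainment statement about these norms.

Lower bound. Let `0 < l < ‖f‖`, so that the modular `M` of `h = |f| / l` exceeds `1`; it is finite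
because `p` is bounded. The function `g = sign f · h^{p-1} · M^{-1/p'}` has `p'`-modular exactly
`1`, and `f g = l · h^p · M^{-1/p'} ≥ l · h^p / M` because `M ≥ 1`. Hence `∫ f g ≥ l`
(`exists_dual_function`). Making the normalising factor depend on `x` avoids having to show that
the modular equals `1` at `l = ‖f‖`.
-/

open MeasureTheory Filter Set
open scoped ENNReal BigOperators NNReal

noncomputable section

abbrev Eu (n : ℕ) := EuclideanSpace ℝ (Fin n)

variable {n : ℕ}

/-- The modular of the variable Lebesgue space. -/
def vModular (p f : Eu n → ℝ) (l : ℝ) : ℝ≥0∞ :=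
  ∫⁻ x, ENNReal.ofReal ((|f x| / l) ^ p x)

/-- Membership in the variable Lebesgue space `L^{p(·)}`. -/
def MemVLp (p f : Eu n → ℝ) : Prop :=
  Measurable f ∧ ∃ l : ℝ, 0 < l ∧ vModular p f l ≤ 1

/-- The Luxemburg norm on `L^{p(·)}`. -/
def vLpNorm (p f : Eu n → ℝ) : ℝ :=
  sInf {l : ℝ | 0 < l ∧ vModular p f l ≤ 1}

/-- The log-Hölder continuity condition. -/
def LogHolder (p : Eu n → ℝ) : Prop :=
  ∃ C : ℝ, (∀ x y : Eu n, dist x y ≤ 1 / 2 → |p x - p y| ≤ C / (-Real.log (dist x y))) ∧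
    (∀ x y : Eu n, ‖x‖ ≤ ‖y‖ → |p x - p y| ≤ C / Real.log (Real.exp 1 + ‖x‖))

/-- `p` is measurable with `0 < p⁻ ≤ p⁺ < ∞`. -/
def GoodExp (p : Eu n → ℝ) : Prop :=
  Measurable p ∧ (∀ x, 0 < p x) ∧ 0 < essInf p volume ∧ ∃ B : ℝ, ∀ x, p x ≤ B

/-- The (axis-parallel) cube with center `z` and side length `r`. -/
def cube (z : Eu n) (r : ℝ) : Set (Eu n) := {x | ∀ i, |x i - z i| ≤ r / 2}

/-- The concentric dilate `Q*` with side length `100 √n` times that of `Q`. -/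
def cubeStar (z : Eu n) (r : ℝ) : Set (Eu n) := cube z (100 * Real.sqrt n * r)

/-- The fractional maximal operator `M_α`. -/
def fracMax (α : ℝ) (f : Eu n → ℝ) (x : Eu n) : ℝ :=
  sSup {v | ∃ (z : Eu n) (r : ℝ), 0 < r ∧ x ∈ cube z r ∧
    v = (volume (cube z r)).toReal ^ (α / n - 1) * ∫ y in cube z r, |f y|}

/-- The multilinear fractional integral `I_α`. -/
def Iα {m : ℕ} (α : ℝ) (f : Fin m → Eu n → ℝ) (x : Eu n) : ℝ :=
  ∫ y : Fin m → Eu n, Real.sqrt (∑ i, ‖x - y i‖ ^ 2) ^ (α - m * n) * ∏ i, f i (y i)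

/-- The commutator `[b, I_α]_j`. -/
def commIα {m : ℕ} (α : ℝ) (b : Eu n → ℝ) (j : Fin m) (f : Fin m → Eu n → ℝ) (x : Eu n) : ℝ :=
  ∫ y : Fin m → Eu n, (b x - b (y j)) * (∑ i, dist x (y i)) ^ (α - m * n) * ∏ i, f i (y i)

/-- The average of `b` over the cube `Q(z,r)`. -/
def cubeAvg (b : Eu n → ℝ) (z : Eu n) (r : ℝ) : ℝ :=
  (volume (cube z r)).toReal⁻¹ * ∫ x in cube z r, b x

/-- The set of mean oscillations of `b` over cubes. -/
def bmoSet (b : Eu n → ℝ) : Set ℝ :=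
  {v | ∃ (z : Eu n) (r : ℝ), 0 < r ∧
    v = (volume (cube z r)).toReal⁻¹ * ∫ x in cube z r, |b x - cubeAvg b z r|}

/-- The BMO norm of `b`. -/
def bmoNorm (b : Eu n → ℝ) : ℝ := sSup (bmoSet b)

/-- Vanishing moments up to order `d`. -/
def momentsVanish (d : ℕ) (a : Eu n → ℝ) : Prop :=
  ∀ β : Fin n → ℕ, (∑ i, β i) ≤ d → (∫ x, a x * ∏ i, x i ^ β i) = 0

/-- A `(p(·), b, d, ∞)`-atom supported on the cube `Q(z,r)`. -/
def IsBAtom (p b : Eu n → ℝ) (d : ℕ) (z : Eu n) (r : ℝ) (a : Eu n → ℝ) : Prop :=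
  Measurable a ∧ (∀ x, x ∉ cube z r → a x = 0) ∧
    (∀ x, |a x| ≤ 1 / vLpNorm p ((cube z r).indicator 1)) ∧
    momentsVanish d a ∧ momentsVanish d (fun x => a x * b x)

/-- The family `F_N` of normalizing Schwartz functions. -/
def FNset (N : ℕ) : Set (SchwartzMap (Eu n) ℝ) :=
  {ψ | (∫ x, ψ x) = 1 ∧
    (∑ k ∈ Finset.range (N + 1), ⨆ x : Eu n, (1 + ‖x‖) ^ N * ‖iteratedFDeriv ℝ k (⇑ψ) x‖) ≤ 1}

/-- The grand maximal function `ℳ f`. -/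
def grandMax (N : ℕ) (f : Eu n → ℝ) (x : Eu n) : ℝ :=
  sSup {v | ∃ ψ ∈ FNset (n := n) N, ∃ t : ℝ, 0 < t ∧
    v = |∫ y, t ^ (-(n : ℝ)) * ψ (t⁻¹ • (x - y)) * f y|}

/-- Hölder's inequality for modulars, where `a` and `b` bound `1 / p` and `1 / p'`. -/
theorem abs_integral_mul_le {p p' f g : Eu n → ℝ}
    (hpm : Measurable p) (hfm : Measurable f)
    (hpq : ∀ x, (p x).HolderConjugate (p' x)) {a b l m : ℝ}
    (ha0 : 0 ≤ a) (hb0 : 0 ≤ b)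
    (ha : ∀ᵐ x, 1 / p x ≤ a) (hb : ∀ᵐ x, 1 / p' x ≤ b)
    (hl : 0 < l) (hm : 0 < m)
    (hf : vModular p f l ≤ 1) (hg : vModular p' g m ≤ 1) :
    |∫ x, f x * g x| ≤ (a + b) * (l * m) := by
  have hlm : 0 ≤ l * m := by positivity
  have hmeas : Measurable fun x => ENNReal.ofReal ((|f x| / l) ^ p x) := by fun_prop
  have key : ∫⁻ x, ENNReal.ofReal ‖f x * g x‖ ≤ ENNReal.ofReal ((a + b) * (l * m)) := by
    calc ∫⁻ x, ENNReal.ofReal ‖f x * g x‖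
        ≤ ∫⁻ x, ENNReal.ofReal (l * m) * (ENNReal.ofReal a * ENNReal.ofReal ((|f x| / l) ^ p x)
            + ENNReal.ofReal b * ENNReal.ofReal ((|g x| / m) ^ p' x)) := by
          apply lintegral_mono_ae
          filter_upwards [ha, hb] with x hax hbx
          have hA : 0 ≤ (|f x| / l) ^ p x := by positivity
          have hB : 0 ≤ (|g x| / m) ^ p' x := by positivity
          rw [← ENNReal.ofReal_mul ha0, ← ENNReal.ofReal_mul hb0,
            ← ENNReal.ofReal_add (by positivity) (by positivity), ← ENNReal.ofReal_mul hlm]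
          apply ENNReal.ofReal_le_ofReal
          have hy := Real.young_inequality_of_nonneg (a := |f x| / l) (b := |g x| / m)
            (by positivity) (by positivity) (hpq x)
          have h1 : (|f x| / l) ^ p x / p x ≤ a * (|f x| / l) ^ p x := by
            rw [div_eq_mul_one_div, mul_comm]; gcongr
          have h2 : (|g x| / m) ^ p' x / p' x ≤ b * (|g x| / m) ^ p' x := by
            rw [div_eq_mul_one_div, mul_comm]; gcongr
          have h3 : ‖f x * g x‖ = (l * m) * (|f x| / l * (|g x| / m)) := by
            rw [Real.norm_eq_abs, abs_mul]; field_simp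
          rw [h3]
          gcongr
          linarith
      _ = ENNReal.ofReal (l * m) * (ENNReal.ofReal a * vModular p f l
            + ENNReal.ofReal b * vModular p' g m) := by
          rw [lintegral_const_mul' _ _ ENNReal.ofReal_ne_top,
            lintegral_add_left (hmeas.const_mul _),
            lintegral_const_mul' _ _ ENNReal.ofReal_ne_top,
            lintegral_const_mul' _ _ ENNReal.ofReal_ne_top]
          rfl
      _ ≤ ENNReal.ofReal (l * m) * (ENNReal.ofReal a * 1 + ENNReal.ofReal b * 1) := by gcongr
      _ = ENNReal.ofReal ((a + b) * (l * m)) := by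
          rw [mul_one, mul_one, ← ENNReal.ofReal_add ha0 hb0, ← ENNReal.ofReal_mul hlm, mul_comm]
  calc |∫ x, f x * g x| = ‖∫ x, f x * g x‖ := rfl
    _ ≤ ENNReal.toReal (∫⁻ x, ENNReal.ofReal ‖f x * g x‖) := norm_integral_le_lintegral_norm _
    _ ≤ ENNReal.toReal (ENNReal.ofReal ((a + b) * (l * m))) :=
        ENNReal.toReal_mono ENNReal.ofReal_ne_top key
    _ = (a + b) * (l * m) := ENNReal.toReal_ofReal (by positivity)

theorem exists_lt_of_vLpNorm_lt {p f : Eu n → ℝ} (hf : MemVLp p f) {t : ℝ}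
    (ht : vLpNorm p f < t) : ∃ l, 0 < l ∧ vModular p f l ≤ 1 ∧ l < t := by
  obtain ⟨-, l₀, hl₀⟩ := hf
  obtain ⟨l, ⟨h0, h1⟩, h2⟩ := exists_lt_of_csInf_lt ⟨l₀, hl₀⟩ ht
  exact ⟨l, h0, h1, h2⟩

theorem vLpNorm_le {p f : Eu n → ℝ} {l : ℝ} (hl : 0 < l) (h : vModular p f l ≤ 1) :
    vLpNorm p f ≤ l :=
  csInf_le ⟨0, fun _ hx => hx.1.le⟩ ⟨hl, h⟩

theorem vLpNorm_nonneg (p f : Eu n → ℝ) : 0 ≤ vLpNorm p f :=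
  Real.sInf_nonneg fun _ hx => hx.1.le

/-- For a bounded exponent, finiteness of the modular does not depend on the scale. -/
theorem vModular_ne_top {p f : Eu n → ℝ} (hp0 : ∀ x, 0 < p x) {B : ℝ} (hB : ∀ x, p x ≤ B)
    (hf : MemVLp p f) {l : ℝ} (hl : 0 < l) : vModular p f l ≠ ∞ := by
  obtain ⟨-, l₀, hl₀, h⟩ := hf
  -- `c ≥ 1`, so `c ^ p x ≤ c ^ B`.
  set c : ℝ := max 1 (l₀ / l) with hc
  have hc1 : 1 ≤ c := le_max_left _ _
  have hle : vModular p f l ≤ ENNReal.ofReal (c ^ B) * vModular p f l₀ := by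
    unfold vModular
    rw [← lintegral_const_mul' _ _ ENNReal.ofReal_ne_top]
    apply lintegral_mono
    intro x
    dsimp only
    rw [← ENNReal.ofReal_mul (by positivity)]
    apply ENNReal.ofReal_le_ofReal
    calc (|f x| / l) ^ p x ≤ (c * (|f x| / l₀)) ^ p x := by
          apply Real.rpow_le_rpow (by positivity) _ (hp0 x).le
          calc |f x| / l = l₀ / l * (|f x| / l₀) := by field_simp
            _ ≤ c * (|f x| / l₀) := by gcongr; exact le_max_right _ _
      _ = c ^ p x * (|f x| / l₀) ^ p x := Real.mul_rpow (by positivity) (by positivity)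
      _ ≤ c ^ B * (|f x| / l₀) ^ p x := by
          gcongr
          exact hB x
  refine ne_top_of_le_ne_top ?_ hle
  exact ENNReal.mul_ne_top ENNReal.ofReal_ne_top (ne_top_of_le_ne_top ENNReal.one_ne_top h)

/-- Below the norm of `f` there is a normalised `g` in the dual space that tests `f` up to `l`. -/
theorem exists_dual_function {p p' f : Eu n → ℝ}
    (hpm : Measurable p) (hp'm : Measurable p') (hfm : Measurable f)
    (hpq : ∀ x, (p x).HolderConjugate (p' x)) {l : ℝ} (hl : 0 < l)
    (hM1 : 1 < vModular p f l) (hM : vModular p f l ≠ ∞) :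
    ∃ g : Eu n → ℝ, Measurable g ∧ vModular p' g 1 ≤ 1 ∧ l ≤ ∫ x, f x * g x := by
  set M : ℝ := (vModular p f l).toReal with hMdef
  have hMof : ENNReal.ofReal M = vModular p f l := ENNReal.ofReal_toReal hM
  have hM1' : 1 < M := by
    rw [hMdef, ← ENNReal.toReal_one]
    exact (ENNReal.toReal_lt_toReal ENNReal.one_ne_top hM).2 hM1
  have hM0 : 0 < M := by linarith
  set h : Eu n → ℝ := fun x => |f x| / l with hh
  have hh0 : ∀ x, 0 ≤ h x := fun x => by positivity
  have hhm : Measurable h := by fun_prop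
  -- `(f / l) * h ^ (p - 2)` is `sign f * h ^ (p - 1)`, also where `f` vanishes.
  set g : Eu n → ℝ := fun x => f x / l * h x ^ (p x - 2) * M ^ (-(1 / p' x)) with hg
  have hgm : Measurable g := by fun_prop
  have habs : ∀ x, |g x| ^ p' x = h x ^ p x * M⁻¹ := by
    intro x
    have hp'0 : p' x ≠ 0 := (hpq x).symm.ne_zero
    have e1 : |g x| = h x * h x ^ (p x - 2) * M ^ (-(1 / p' x)) := by
      rw [hg]
      simp only [abs_mul, abs_div, abs_of_pos hl]
      rw [abs_of_nonneg (Real.rpow_nonneg (hh0 x) _), abs_of_pos (Real.rpow_pos_of_pos hM0 _)]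
    have e2 : (M ^ (-(1 / p' x))) ^ p' x = M⁻¹ := by
      rw [← Real.rpow_mul hM0.le, neg_mul, one_div_mul_cancel hp'0, Real.rpow_neg_one]
    rcases (hh0 x).eq_or_lt with h0 | hpos
    · rw [e1, ← h0, zero_mul, zero_mul, Real.zero_rpow hp'0, Real.zero_rpow (hpq x).ne_zero,
        zero_mul]
    · have e3 : h x * h x ^ (p x - 2) = h x ^ (p x - 1) := by
        rw [← Real.rpow_one_add' hpos.le (by linarith [(hpq x).lt])]
        congr 1; ring
      rw [e1, e3, Real.mul_rpow (by positivity) (by positivity), e2, ← Real.rpow_mul hpos.le,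
        (hpq x).sub_one_mul_conj]
  have hfg : ∀ x, f x * g x = l * h x ^ p x * M ^ (-(1 / p' x)) := by
    intro x
    rcases (hh0 x).eq_or_lt with h0 | hpos
    · have hf0 : f x = 0 := by
        have : |f x| / l = 0 := h0.symm
        rcases div_eq_zero_iff.1 this with h | h
        · exact abs_eq_zero.1 h
        · exact absurd h hl.ne'
      rw [hf0, ← h0, Real.zero_rpow (hpq x).ne_zero]
      ring
    · have e3 : h x ^ p x = h x ^ 2 * h x ^ (p x - 2) := by
        rw [← Real.rpow_natCast, ← Real.rpow_add hpos]
        congr 1; push_cast; ring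
      have e4 : f x * (f x / l) = l * h x ^ 2 := by
        simp only [hh, div_pow, sq_abs]; field_simp
      calc f x * g x = f x * (f x / l) * h x ^ (p x - 2) * M ^ (-(1 / p' x)) := by
            simp only [hg]; ring
        _ = _ := by rw [e4, e3]; ring
  have hint : Integrable fun x => h x ^ p x := by
    refine ⟨(hhm.pow hpm).aestronglyMeasurable, ?_⟩
    rw [hasFiniteIntegral_iff_ofReal (ae_of_all _ fun x => Real.rpow_nonneg (hh0 x) _)]
    exact lt_top_iff_ne_top.2 hM
  have hintM : ∫ x, h x ^ p x = M := by
    rw [integral_eq_lintegral_of_nonneg_ae (ae_of_all _ fun x => Real.rpow_nonneg (hh0 x) _)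
      hint.aestronglyMeasurable]
    rfl
  have hfgle : ∀ x, ‖f x * g x‖ ≤ l * h x ^ p x := by
    intro x
    have hle : M ^ (-(1 / p' x)) ≤ 1 :=
      Real.rpow_le_one_of_one_le_of_nonpos hM1'.le
        (neg_nonpos.2 (one_div_nonneg.2 (hpq x).symm.nonneg))
    have hA : 0 ≤ l * h x ^ p x := mul_nonneg hl.le (Real.rpow_nonneg (hh0 x) _)
    rw [hfg, Real.norm_of_nonneg (by positivity)]
    exact mul_le_of_le_one_right hA hle
  refine ⟨g, hgm, ?_, ?_⟩
  · unfold vModular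
    simp only [div_one, habs]
    simp_rw [ENNReal.ofReal_mul' (inv_nonneg.2 hM0.le)]
    rw [lintegral_mul_const' _ _ ENNReal.ofReal_ne_top]
    change vModular p f l * _ ≤ 1
    rw [← hMof, ← ENNReal.ofReal_mul hM0.le, mul_inv_cancel₀ hM0.ne', ENNReal.ofReal_one]
  · have hI : Integrable fun x => f x * g x :=
      (hint.const_mul l).mono' (hfm.mul hgm).aestronglyMeasurable (ae_of_all _ hfgle)
    calc l = ∫ x, (l * M⁻¹) * h x ^ p x := by
          rw [integral_const_mul, hintM, mul_assoc, inv_mul_cancel₀ hM0.ne', mul_one]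
      _ ≤ ∫ x, f x * g x := by
          apply integral_mono (hint.const_mul _) hI
          intro x
          dsimp only
          rw [hfg]
          have hA : 0 ≤ l * h x ^ p x := mul_nonneg hl.le (Real.rpow_nonneg (hh0 x) _)
          -- `1 / p' x ≤ 1` and `M ≥ 1`.
          have hle : M⁻¹ ≤ M ^ (-(1 / p' x)) := by
            rw [← Real.rpow_neg_one]
            apply Real.rpow_le_rpow_of_exponent_le hM1'.le
            have : 1 / p' x ≤ 1 := by
              rw [div_le_one (hpq x).symm.pos]; exact (hpq x).symm.lt.le
            linarith
          calc l * M⁻¹ * h x ^ p x = l * h x ^ p x * M⁻¹ := by ring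
            _ ≤ _ := mul_le_mul_of_nonneg_left hle hA

/-- norm-duality estimates on variable Lebesgue spaces. -/
theorem stmt2 {n : ℕ} (p p' : Eu n → ℝ)
    (hpm : Measurable p) (hp1 : ∀ x, 1 < p x)
    (hinf : 1 < essInf p volume) (hsup : ∃ B : ℝ, ∀ x, p x ≤ B)
    (hconj : ∀ x, 1 / p x + 1 / p' x = 1)
    (f : Eu n → ℝ) (hf : MemVLp p f) :
    vLpNorm p f ≤
        sSup {v | ∃ g : Eu n → ℝ, MemVLp p' g ∧ vLpNorm p' g ≤ 1 ∧ v = |∫ x, f x * g x|} ∧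
      sSup {v | ∃ g : Eu n → ℝ, MemVLp p' g ∧ vLpNorm p' g ≤ 1 ∧ v = |∫ x, f x * g x|} ≤
        (1 + 1 / essInf p volume - 1 / essSup p volume) * vLpNorm p f := by
  obtain ⟨B, hB⟩ := hsup
  have hp0 : ∀ x, 0 < p x := fun x => zero_lt_one.trans (hp1 x)
  have hpq : ∀ x, (p x).HolderConjugate (p' x) := fun x =>
    Real.holderConjugate_iff.2 ⟨hp1 x, by simpa only [one_div] using hconj x⟩
  have hp'm : Measurable p' := by
    have : p' = fun x => p x / (p x - 1) := funext fun x => (hpq x).conjugate_eq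
    rw [this]; fun_prop
  have hlo : ∀ᵐ x, essInf p volume ≤ p x :=
    ae_essInf_le ⟨0, eventually_map.2 (ae_of_all _ fun x => (hp0 x).le)⟩
  have hhi : ∀ᵐ x, p x ≤ essSup p volume :=
    ae_le_essSup ⟨B, eventually_map.2 (ae_of_all _ hB)⟩
  set a : ℝ := 1 / essInf p volume with ha
  set b : ℝ := 1 - 1 / essSup p volume with hb
  have ha0 : 0 ≤ a := one_div_nonneg.2 (by linarith)
  have hb0 : 0 ≤ b := by
    obtain ⟨x, hx⟩ := hhi.exists
    have h1 : 1 < essSup p volume := (hp1 x).trans_le hx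
    have : 1 / essSup p volume ≤ 1 := (div_le_one (by linarith)).2 h1.le
    linarith
  have hpa : ∀ᵐ x, 1 / p x ≤ a := by
    filter_upwards [hlo] with x hx
    exact one_div_le_one_div_of_le (by linarith) hx
  have hpb : ∀ᵐ x, 1 / p' x ≤ b := by
    filter_upwards [hhi] with x hx
    have := one_div_le_one_div_of_le (hp0 x) hx
    linarith [hconj x]
  have hr : 1 + a - 1 / essSup p volume = a + b := by rw [hb]; ring
  rw [hr]
  set S : Set ℝ :=
    {v | ∃ g : Eu n → ℝ, MemVLp p' g ∧ vLpNorm p' g ≤ 1 ∧ v = |∫ x, f x * g x|} with hS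
  have hupper : ∀ v ∈ S, v ≤ (a + b) * vLpNorm p f := by
    rintro v ⟨g, hg, hg1, rfl⟩
    have hε : ∀ ε > 0, |∫ x, f x * g x| ≤ (a + b) * ((vLpNorm p f + ε) * (1 + ε)) := by
      intro ε hε
      obtain ⟨l, hl, hlf, hlt⟩ := exists_lt_of_vLpNorm_lt hf (t := vLpNorm p f + ε) (by linarith)
      obtain ⟨m, hm, hmg, hmt⟩ := exists_lt_of_vLpNorm_lt hg (t := 1 + ε) (by linarith)
      refine (abs_integral_mul_le hpm hf.1 hpq ha0 hb0 hpa hpb hl hm hlf hmg).trans ?_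
      gcongr
      linarith
    have hlim : Tendsto (fun ε : ℝ => (a + b) * ((vLpNorm p f + ε) * (1 + ε)))
        (nhdsWithin 0 (Ioi 0)) (nhds ((a + b) * vLpNorm p f)) := by
      have hc : Continuous fun ε : ℝ => (a + b) * ((vLpNorm p f + ε) * (1 + ε)) := by fun_prop
      have := hc.tendsto 0
      simp only [add_zero, mul_one] at this
      exact this.mono_left nhdsWithin_le_nhds
    exact ge_of_tendsto hlim (eventually_mem_nhdsWithin.mono fun ε h => hε ε h)
  have hSnn : 0 ≤ sSup S := Real.sSup_nonneg (by rintro v ⟨g, -, -, rfl⟩; exact abs_nonneg _)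
  refine ⟨?_, Real.sSup_le hupper (mul_nonneg (add_nonneg ha0 hb0) (vLpNorm_nonneg p f))⟩
  refine le_of_forall_lt_imp_le_of_dense fun l hlt => ?_
  rcases le_or_gt l 0 with hl | hl
  · exact hl.trans hSnn
  have hM1 : 1 < vModular p f l := by
    by_contra hcon
    exact absurd (vLpNorm_le hl (not_lt.1 hcon)) (not_le.2 hlt)
  obtain ⟨g, hgm, hg1, hlg⟩ := exists_dual_function hpm hp'm hf.1 hpq hl hM1
    (vModular_ne_top hp0 hB hf hl)
  exact (hlg.trans (le_abs_self _)).trans <| le_csSup ⟨_, hupper⟩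
    ⟨g, ⟨hgm, 1, one_pos, hg1⟩, vLpNorm_le one_pos hg1, rfl⟩

end
end

section
/- Let m ≥ 1 and 0 < α < mn. Let r_i(·): ℝⁿ → (1,∞), i = 1,…,m, be measurable functions with 1 < r_i⁻ ≤ r_i⁺ < ∞ satisfying the log-Hölder condition, and define s(·) by 1/s(x) = Σ_{i=1}^m 1/r_i(x) − α/n, assuming s(x) > 0 for all x and s⁺ < ∞. Then there is a constant C such that for all f_i ∈ L^{r_i(·)}(ℝⁿ), ‖I_α(f₁,…,f_m)‖_{L^{s(·)}} ≤ C ∏_{i=1}^m ‖f_i‖_{L^{r_i(·)}}. -/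
/-!
The proof is a multilinear, variable exponent version of Hedberg's argument, carried out at the
level of modulars for nonnegative functions with values in `[0, ∞]`.

*Discretisation.* The kernel is dominated by a sum over the scales `2 ^ k` of indicators of
products of balls, so that (`potential_le`) the potential at `x` is at most a constant times
`∑ 2 ^ (k α) ∏ ballAvg k (g i) x`, the sum running over all integers `k`.

*One function.* For `g` in the unit modular ball of `L^{r(·)}` there is a majorant `H` with bounded
integral such that the mean of `g` over `B(x, 2 ^ k)` is `O(min (H x) (2 ^ (-k n)) ^ (1 / r x))` for
`k ≤ 0`, and likewise with the limit exponent `pInf` in place of `r x` for `k ≥ 0`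
(`exists_majorant`). Here `g` is split at height one. For the large part the local log-Hölder
condition gives a Jensen-type inequality `ballAvg_le_jensen`; for the small part the decay
condition at infinity allows replacing the exponent by its limit, with an integrable error
(`rpow_le_conv`). Then `H` is built from powers of maximal functions, and its integral is bounded
by the constant exponent maximal theorem `strong_type`.

*Summation.* Multiplying these bounds and summing over `k` (`hedberg_sum`, `tsum_scales_le`), the
potential is at most a constant times `H ^ (1 / s x) + (min H 1) ^ δ`, where `H` is now the sum of
the majorants and `δ = ∑ 1 / pInf i - α / n` is the limit of `1 / s` at infinity. Since `s` is
bounded, both exponents are bounded below. Raising to the power `s x` and applying `rpow_le_conv`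
once more bounds the modular of the potential (`modular_potential_le`).

*Norms.* As `s ≥ 1 / m`, a bound `K` for the modular becomes a bound `K ^ m` for the norm, by scaling
(`vModular_Iα_le_one`), and the infima defining the norms are approached by a limit.
-/

open MeasureTheory Filter Set
open scoped ENNReal BigOperators NNReal

noncomputable section

variable {n : ℕ}

/-! ### Powers of two and geometric sums in `ℝ≥0∞` -/

/-- The real power `2 ^ c`, as an extended nonnegative real. -/
def twoPow (c : ℝ) : ℝ≥0∞ := (2 : ℝ≥0∞) ^ c

theorem twoPow_add (a b : ℝ) : twoPow (a + b) = twoPow a * twoPow b :=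
  ENNReal.rpow_add _ _ (by norm_num) (by norm_num)

theorem twoPow_ne_zero (a : ℝ) : twoPow a ≠ 0 := by
  simp [twoPow]

theorem twoPow_ne_top (a : ℝ) : twoPow a ≠ ∞ := by
  simp [twoPow]

theorem twoPow_zero : twoPow 0 = 1 := by simp [twoPow]

theorem twoPow_mono {a b : ℝ} (h : a ≤ b) : twoPow a ≤ twoPow b :=
  ENNReal.rpow_le_rpow_of_exponent_le (by norm_num) h

theorem twoPow_rpow (a b : ℝ) : twoPow a ^ b = twoPow (a * b) :=
  (ENNReal.rpow_mul _ _ _).symm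

theorem twoPow_le_one {a : ℝ} (h : a ≤ 0) : twoPow a ≤ 1 :=
  twoPow_zero ▸ twoPow_mono h

theorem one_le_twoPow {a : ℝ} (h : 0 ≤ a) : 1 ≤ twoPow a :=
  twoPow_zero ▸ twoPow_mono h

theorem ofReal_two_rpow (a : ℝ) : ENNReal.ofReal ((2 : ℝ) ^ a) = twoPow a := by
  rw [← ENNReal.ofReal_rpow_of_pos (by norm_num)]; simp [twoPow]

theorem twoPow_mul_neg (a : ℝ) : twoPow a * twoPow (-a) = 1 := by
  rw [← twoPow_add]; simp [twoPow_zero]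

theorem twoPow_neg_mul (a : ℝ) : twoPow (-a) * twoPow a = 1 := by
  rw [← twoPow_add]; simp [twoPow_zero]

theorem exists_twoPow_lt_le {x : ℝ≥0∞} (h0 : x ≠ 0) (ht : x ≠ ∞) :
    ∃ k : ℤ, twoPow k < x ∧ x ≤ twoPow (k + 1) := by
  obtain ⟨k, hk⟩ := ENNReal.exists_mem_Ioc_zpow h0 ht (y := 2) (by norm_num) (by norm_num)
  refine ⟨k, ?_, ?_⟩
  · simpa [twoPow, ENNReal.rpow_intCast] using hk.1
  · have := hk.2
    rw [← ENNReal.rpow_intCast] at this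
    simpa [twoPow] using this

/-- The two-sided geometric series `∑ 2 ^ (-c |j|)`. -/
def geomZ (c : ℝ) : ℝ≥0∞ := ∑' j : ℤ, twoPow (-(c * |(j : ℝ)|))

theorem geomZ_ne_top {c : ℝ} (hc : 0 < c) : geomZ c ≠ ∞ := by
  have hq0 : (0 : ℝ) < 2 ^ (-c) := Real.rpow_pos_of_pos (by norm_num) _
  have hq : (2 : ℝ) ^ (-c) < 1 := Real.rpow_lt_one_of_one_lt_of_neg (by norm_num) (by linarith)
  have hnat : Summable fun j : ℕ => (2 : ℝ) ^ (-(c * (j : ℝ))) := by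
    refine (summable_geometric_of_lt_one hq0.le hq).congr fun j => ?_
    rw [← Real.rpow_natCast, ← Real.rpow_mul (by norm_num)]
    ring_nf
  have hs : Summable fun j : ℤ => (2 : ℝ) ^ (-(c * |(j : ℝ)|)) := by
    refine Summable.of_nat_of_neg ?_ ?_ <;> simpa using hnat
  have := hs.tsum_ofReal_ne_top
  simpa [geomZ, ofReal_two_rpow] using this

/-- A series dominated by a two-sided geometric sequence centred at `k₀`. -/
theorem tsum_le_geomZ {c : ℝ} {t : ℤ → ℝ≥0∞} {X : ℝ≥0∞} (k₀ : ℤ)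
    (h : ∀ k : ℤ, t k ≤ X * twoPow (-(c * |(k : ℝ) - k₀|))) : ∑' k, t k ≤ X * geomZ c := by
  calc ∑' k, t k ≤ ∑' k : ℤ, X * twoPow (-(c * |(k : ℝ) - k₀|)) := ENNReal.tsum_le_tsum h
    _ = X * ∑' k : ℤ, twoPow (-(c * |(k : ℝ) - k₀|)) := ENNReal.tsum_mul_left
    _ = X * geomZ c := by
      congr 1
      rw [geomZ, ← (Equiv.subRight k₀).tsum_eq (fun j : ℤ => twoPow (-(c * |(j : ℝ)|)))]
      simp

/-! ### Averages over dyadic balls and the maximal function -/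

/-- The volume of the Euclidean unit ball. -/
def unitVol (n : ℕ) : ℝ≥0∞ := volume (Metric.closedBall (0 : Eu n) 1)

theorem unitVol_ne_zero : unitVol n ≠ 0 :=
  (Metric.measure_closedBall_pos _ _ one_pos).ne'

theorem unitVol_ne_top : unitVol n ≠ ∞ := measure_closedBall_lt_top.ne

/-- The closed ball of radius `2 ^ k` around `x`. -/
def dball (k : ℤ) (x : Eu n) : Set (Eu n) := Metric.closedBall x ((2 : ℝ) ^ (k : ℝ))

theorem volume_dball (k : ℤ) (x : Eu n) : volume (dball k x) = twoPow (k * n) * unitVol n := by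
  rw [dball, Measure.addHaar_closedBall' _ _ (by positivity), unitVol, ← Real.rpow_natCast,
    ← Real.rpow_mul (by norm_num), ofReal_two_rpow]
  simp

theorem measurableSet_dball (k : ℤ) (x : Eu n) : MeasurableSet (dball k x) :=
  Metric.isClosed_closedBall.measurableSet

/-- The mean of `g` over the ball of radius `2 ^ k` around `x`. -/
def ballAvg (k : ℤ) (g : Eu n → ℝ≥0∞) (x : Eu n) : ℝ≥0∞ :=
  (unitVol n)⁻¹ * twoPow (-(k * n)) * ∫⁻ y in dball k x, g y

/-- The centred Hardy–Littlewood maximal function along dyadic radii. -/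
def maxFn (g : Eu n → ℝ≥0∞) (x : Eu n) : ℝ≥0∞ := ⨆ k : ℤ, ballAvg k g x

theorem ballAvg_le_maxFn (k : ℤ) (g : Eu n → ℝ≥0∞) (x : Eu n) : ballAvg k g x ≤ maxFn g x :=
  le_iSup (fun k => ballAvg k g x) k

theorem lintegral_dball (k : ℤ) (g : Eu n → ℝ≥0∞) (x : Eu n) :
    ∫⁻ y in dball k x, g y = volume (dball k x) * ballAvg k g x := by
  rw [volume_dball, ballAvg]
  calc _ = (unitVol n * (unitVol n)⁻¹) * (twoPow (k * n) * twoPow (-(k * n)))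
      * ∫⁻ y in dball k x, g y := by
        rw [ENNReal.mul_inv_cancel unitVol_ne_zero unitVol_ne_top, twoPow_mul_neg]; simp
    _ = _ := by ring

theorem ballAvg_const (k : ℤ) (c : ℝ≥0∞) (x : Eu n) : ballAvg k (fun _ => c) x = c := by
  rw [ballAvg, setLIntegral_const, volume_dball]
  calc _ = (unitVol n * (unitVol n)⁻¹) * (twoPow (k * n) * twoPow (-(k * n))) * c := by ring
    _ = c := by rw [ENNReal.mul_inv_cancel unitVol_ne_zero unitVol_ne_top, twoPow_mul_neg]; simp

theorem ballAvg_mono_on (k : ℤ) {g h : Eu n → ℝ≥0∞} (x : Eu n)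
    (H : ∀ y ∈ dball k x, g y ≤ h y) : ballAvg k g x ≤ ballAvg k h x := by
  unfold ballAvg
  gcongr 1
  exact setLIntegral_mono' (measurableSet_dball k x) H

theorem ballAvg_mono (k : ℤ) {g h : Eu n → ℝ≥0∞} (x : Eu n)
    (H : ∀ y, g y ≤ h y) : ballAvg k g x ≤ ballAvg k h x :=
  ballAvg_mono_on k x fun y _ => H y

theorem ballAvg_add (k : ℤ) {g h : Eu n → ℝ≥0∞} (hg : Measurable g) (x : Eu n) :
    ballAvg k (fun y => g y + h y) x = ballAvg k g x + ballAvg k h x := by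
  unfold ballAvg
  rw [lintegral_add_left hg, mul_add]

theorem ballAvg_const_mul (k : ℤ) {g : Eu n → ℝ≥0∞} (hg : Measurable g) (c : ℝ≥0∞) (x : Eu n) :
    ballAvg k (fun y => c * g y) x = c * ballAvg k g x := by
  unfold ballAvg
  rw [lintegral_const_mul _ hg]; ring

theorem ballAvg_le_lintegral (k : ℤ) (g : Eu n → ℝ≥0∞) (x : Eu n) :
    ballAvg k g x ≤ (unitVol n)⁻¹ * twoPow (-(k * n)) * ∫⁻ y, g y := by
  unfold ballAvg
  gcongr 1
  exact setLIntegral_le_lintegral _ _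

theorem measurable_ballAvg (k : ℤ) {g : Eu n → ℝ≥0∞} (hg : Measurable g) :
    Measurable (ballAvg k g) := by
  unfold ballAvg
  refine Measurable.const_mul ?_ _
  have h : (fun x : Eu n => ∫⁻ y in dball k x, g y) =
      fun x => ∫⁻ y, ({p : Eu n × Eu n | dist p.2 p.1 ≤ (2 : ℝ) ^ (k : ℝ)}.indicator
        (fun p => g p.2) (x, y)) := by
    ext x
    rw [← lintegral_indicator (measurableSet_dball k x)]
    rfl
  rw [h]
  refine Measurable.lintegral_prod_right' (f := fun p : Eu n × Eu n =>
    {p : Eu n × Eu n | dist p.2 p.1 ≤ (2 : ℝ) ^ (k : ℝ)}.indicator (fun p => g p.2) p) ?_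
  refine (hg.comp measurable_snd).indicator ?_
  exact measurableSet_le (measurable_snd.dist measurable_fst) measurable_const

theorem measurable_maxFn {g : Eu n → ℝ≥0∞} (hg : Measurable g) : Measurable (maxFn g) :=
  Measurable.iSup fun k => measurable_ballAvg k hg

/-- The weak type `(1, 1)` inequality, by the Vitali covering lemma. The factor `4` is any
enlargement ratio exceeding `3`. -/
theorem weak_type (hn : 0 < n) {g : Eu n → ℝ≥0∞} {t : ℝ≥0∞} (ht0 : t ≠ 0) (ht : t ≠ ∞) :
    t * volume {x | t < maxFn g x} ≤ twoPow (2 * n) * ∫⁻ y, g y := by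
  by_cases hI : ∫⁻ y, g y = ∞
  · rw [hI, ENNReal.mul_top (twoPow_ne_zero _)]; exact le_top
  have hex : ∀ x ∈ {x | t < maxFn g x}, ∃ k : ℤ, t < ballAvg k g x := fun x hx => lt_iSup_iff.1 hx
  choose! κ hκ using hex
  -- On the level set the average is large, so the volume of the ball is at most `∫ g / t`.
  have hvol : ∀ x ∈ {x | t < maxFn g x}, t * volume (dball (κ x) x) ≤ ∫⁻ y in dball (κ x) x, g y := by
    intro x hx
    rw [lintegral_dball, mul_comm]
    gcongr
    exact (hκ x hx).le
  obtain ⟨R, hR⟩ : ∃ R : ℝ, ∀ x ∈ {x | t < maxFn g x}, (2 : ℝ) ^ (κ x : ℝ) ≤ R := by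
    set X : ℝ≥0∞ := (t * unitVol n)⁻¹ * ∫⁻ y, g y with hX
    have htu0 : t * unitVol n ≠ 0 := mul_ne_zero ht0 unitVol_ne_zero
    have htut : t * unitVol n ≠ ∞ := ENNReal.mul_ne_top ht unitVol_ne_top
    have hXt : X ≠ ∞ := ENNReal.mul_ne_top (ENNReal.inv_ne_top.2 htu0) hI
    refine ⟨(X ^ ((n : ℝ)⁻¹)).toReal, fun x hx => ?_⟩
    have h1 : twoPow (κ x * n) ≤ X := by
      have h2 := (hvol x hx).trans (setLIntegral_le_lintegral _ _)
      rw [volume_dball] at h2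
      calc twoPow (κ x * n) = (t * unitVol n)⁻¹ * (t * unitVol n) * twoPow (κ x * n) := by
            rw [ENNReal.inv_mul_cancel htu0 htut, one_mul]
        _ = (t * unitVol n)⁻¹ * (t * (twoPow (κ x * n) * unitVol n)) := by ring
        _ ≤ X := by rw [hX]; gcongr
    have h3 : twoPow (κ x) ≤ X ^ ((n : ℝ)⁻¹) := by
      have h4 := ENNReal.rpow_le_rpow h1 (z := (n : ℝ)⁻¹) (by positivity)
      rw [twoPow_rpow] at h4
      have hn' : (n : ℝ) ≠ 0 := by positivity
      rwa [mul_assoc, mul_inv_cancel₀ hn', mul_one] at h4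
    have h5 : X ^ ((n : ℝ)⁻¹) ≠ ∞ := ENNReal.rpow_ne_top_of_nonneg (by positivity) hXt
    rw [← ofReal_two_rpow] at h3
    exact (ENNReal.ofReal_le_iff_le_toReal h5).1 h3
  obtain ⟨u, hut, hdisj, hcov⟩ := Vitali.exists_disjoint_subfamily_covering_enlargement_closedBall
    {x | t < maxFn g x} (fun x : Eu n => x) (fun x => (2 : ℝ) ^ (κ x : ℝ)) R hR 4 (by norm_num)
  have hcount : u.Countable := by
    refine hdisj.countable_of_nonempty_interior fun x _ => ?_
    refine ⟨x, ?_⟩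
    exact Metric.ball_subset_interior_closedBall (Metric.mem_ball_self (by positivity))
  have hsub : {x | t < maxFn g x} ⊆ ⋃ b ∈ u, Metric.closedBall b (4 * (2 : ℝ) ^ (κ b : ℝ)) := by
    intro x hx
    obtain ⟨b, hb, hbx⟩ := hcov x hx
    exact mem_biUnion hb (hbx (Metric.mem_closedBall_self (by positivity)))
  have h4 : ∀ b : Eu n, volume (Metric.closedBall b (4 * (2 : ℝ) ^ (κ b : ℝ)))
      = twoPow (2 * n) * volume (dball (κ b) b) := by
    intro b
    have : (4 : ℝ) * 2 ^ (κ b : ℝ) = 2 ^ ((κ b + 2 : ℤ) : ℝ) := by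
      push_cast
      rw [Real.rpow_add (by norm_num)]; norm_num; ring
    rw [this]
    change volume (dball (κ b + 2) b) = _
    rw [volume_dball, volume_dball]
    push_cast
    rw [add_mul, twoPow_add]; ring
  calc t * volume {x | t < maxFn g x}
      ≤ t * ∑' b : u, volume (Metric.closedBall (b : Eu n) (4 * (2 : ℝ) ^ (κ b : ℝ))) := by
        gcongr
        exact (measure_mono hsub).trans (measure_biUnion_le _ hcount _)
    _ = twoPow (2 * n) * ∑' b : u, t * volume (dball (κ b) (b : Eu n)) := by
        simp_rw [h4]
        rw [ENNReal.tsum_mul_left, ENNReal.tsum_mul_left]; ring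
    _ ≤ twoPow (2 * n) * ∑' b : u, ∫⁻ y in dball (κ b) (b : Eu n), g y := by
        gcongr with b
        exact hvol b (hut b.2)
    _ = twoPow (2 * n) * ∫⁻ y in ⋃ b ∈ u, dball (κ b) b, g y := by
        rw [lintegral_biUnion hcount (fun b _ => measurableSet_dball _ _) hdisj]
    _ ≤ _ := by gcongr 1; exact setLIntegral_le_lintegral _ _

/-- The weak type inequality with the right-hand side restricted to the set where `g` is large. -/
theorem weak_type' (hn : 0 < n) {g : Eu n → ℝ≥0∞} (hg : Measurable g) (j : ℤ) :
    volume {x | twoPow j < maxFn g x} ≤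
      twoPow (2 * n + 1 - j) * ∫⁻ y, {y | twoPow (j - 1) < g y}.indicator g y := by
  set g' := {y | twoPow ((j : ℝ) - 1) < g y}.indicator g with hg'
  have hms : MeasurableSet {y | twoPow ((j : ℝ) - 1) < g y} := measurableSet_lt measurable_const hg
  have hm' : Measurable g' := hg.indicator hms
  have hle : ∀ y, g y ≤ g' y + twoPow (j - 1) := by
    intro y
    by_cases h : twoPow ((j : ℝ) - 1) < g y
    · rw [hg', indicator_of_mem (by exact h)]; exact le_self_add
    · exact (not_lt.1 h).trans le_add_self
  have hsub : {x | twoPow j < maxFn g x} ⊆ {x | twoPow (j - 1) < maxFn g' x} := by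
    intro x hx
    obtain ⟨k, hk⟩ := lt_iSup_iff.1 (show twoPow j < ⨆ k : ℤ, ballAvg k g x from hx)
    refine lt_of_lt_of_le ?_ (ballAvg_le_maxFn k g' x)
    have h1 : ballAvg k g x ≤ ballAvg k g' x + twoPow (j - 1) := by
      calc _ ≤ _ := ballAvg_mono k x hle
        _ = _ := by rw [ballAvg_add k hm', ballAvg_const]
    have h2 : twoPow (j : ℝ) = twoPow (j - 1) + twoPow (j - 1) := by
      rw [← two_mul]
      conv_lhs => rw [show (j : ℝ) = 1 + (j - 1) by ring, twoPow_add]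
      simp [twoPow]
    rw [h2] at hk
    exact (ENNReal.add_lt_add_iff_right (twoPow_ne_top _)).1 (hk.trans_le h1)
  have hw := weak_type hn (g := g') (twoPow_ne_zero ((j : ℝ) - 1)) (twoPow_ne_top _)
  calc volume {x | twoPow j < maxFn g x} ≤ volume {x | twoPow (j - 1) < maxFn g' x} :=
        measure_mono hsub
    _ = twoPow (-((j : ℝ) - 1)) * (twoPow (j - 1) * volume {x | twoPow (j - 1) < maxFn g' x}) := by
        rw [← mul_assoc, twoPow_neg_mul, one_mul]
    _ ≤ twoPow (-((j : ℝ) - 1)) * (twoPow (2 * n) * ∫⁻ y, g' y) := by gcongr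
    _ = _ := by rw [← mul_assoc, ← twoPow_add]; ring_nf

/-- The maximal theorem on `L^q`, `q > 1`, by summing the weak type bounds over dyadic levels. -/
theorem strong_type (hn : 0 < n) {q : ℝ} (hq : 1 < q) : ∃ C : ℝ≥0∞, C ≠ ∞ ∧
    ∀ g : Eu n → ℝ≥0∞, Measurable g → ∫⁻ x, maxFn g x ^ q ≤ C * ∫⁻ x, g x ^ q := by
  have hq1 : 0 < q - 1 := by linarith
  refine ⟨twoPow (2 * n + 1 + q) * (twoPow (2 * (q - 1)) * geomZ (q - 1)),
    ENNReal.mul_ne_top (twoPow_ne_top _) (ENNReal.mul_ne_top (twoPow_ne_top _) (geomZ_ne_top hq1)),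
    fun g hg => ?_⟩
  have hM := measurable_maxFn hg
  have hms : ∀ j : ℤ, MeasurableSet {x | twoPow j < maxFn g x} := fun j =>
    measurableSet_lt measurable_const hM
  have hms' : ∀ j : ℤ, MeasurableSet {x | twoPow ((j : ℝ) - 1) < g x} := fun j =>
    measurableSet_lt measurable_const hg
  have hpt : ∀ x, maxFn g x ^ q ≤
      ∑' j : ℤ, {x | twoPow j < maxFn g x}.indicator (fun _ => twoPow ((j + 1) * q)) x := by
    intro x
    rcases eq_or_ne (maxFn g x) 0 with h0 | h0
    · rw [h0, ENNReal.zero_rpow_of_pos (by linarith)]; exact zero_le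
    rcases eq_or_ne (maxFn g x) ∞ with ht | ht
    -- Every level contributes, and the nonnegative levels contribute at least `1` each.
    · have : ∑' j : ℕ, (1 : ℝ≥0∞) = ∞ := ENNReal.tsum_const_eq_top_of_ne_zero one_ne_zero
      rw [ht, ENNReal.top_rpow_of_pos (by linarith), ← this]
      calc ∑' j : ℕ, (1 : ℝ≥0∞) ≤ ∑' j : ℕ, {x | twoPow ((j : ℤ) : ℝ) < maxFn g x}.indicator
            (fun _ => twoPow ((((j : ℤ) : ℝ) + 1) * q)) x := by
            refine ENNReal.tsum_le_tsum fun j => ?_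
            rw [indicator_of_mem]
            · exact one_le_twoPow (by push_cast; positivity)
            · rw [mem_ofPred_eq, ht]; exact (twoPow_ne_top _).lt_top
        _ ≤ _ := ENNReal.tsum_comp_le_tsum_of_injective Nat.cast_injective
            (fun j : ℤ => {x | twoPow j < maxFn g x}.indicator (fun _ => twoPow ((j + 1) * q)) x)
    · obtain ⟨k, hk1, hk2⟩ := exists_twoPow_lt_le h0 ht
      refine le_trans ?_ (ENNReal.le_tsum k)
      rw [indicator_of_mem (by exact hk1), ← twoPow_rpow]
      exact ENNReal.rpow_le_rpow hk2 (by linarith)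
  have hsum : ∀ y, ∑' j : ℤ, twoPow (j * (q - 1)) *
      {y | twoPow ((j : ℝ) - 1) < g y}.indicator g y ≤ twoPow (2 * (q - 1)) * geomZ (q - 1) * g y ^ q := by
    intro y
    rcases eq_or_ne (g y) 0 with h0 | h0
    · simp [indicator, h0]
    rcases eq_or_ne (g y) ∞ with ht | ht
    · rw [ht, ENNReal.top_rpow_of_pos (by linarith), ENNReal.mul_top]
      · exact le_top
      · refine mul_ne_zero (twoPow_ne_zero _) fun h => ?_
        have := ENNReal.tsum_eq_zero.1 h 0
        exact twoPow_ne_zero _ this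
    obtain ⟨k, hk1, hk2⟩ := exists_twoPow_lt_le h0 ht
    have hgq : g y ^ q = g y ^ (q - 1) * g y := by
      conv_rhs => rw [← ENNReal.rpow_one (g y), ← ENNReal.rpow_mul]
      rw [← ENNReal.rpow_add _ _ h0 ht]; ring_nf
    refine (tsum_le_geomZ (c := q - 1) (X := twoPow (2 * (q - 1)) * g y ^ q) (k + 2)
      fun j => ?_).trans (le_of_eq (by ring))
    by_cases hj : twoPow ((j : ℝ) - 1) < g y
    · rw [indicator_of_mem (by exact hj), hgq]
      -- Only levels `j ≤ k + 2` survive, where `2 ^ k < g y ≤ 2 ^ (k + 1)`.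
      have hjk : j ≤ k + 2 := by
        by_contra hcon
        have hcon' : k + 3 ≤ j := by omega
        have hR : (k : ℝ) + 3 ≤ j := by exact_mod_cast hcon'
        have h3 : twoPow (k + 1) ≤ twoPow ((j : ℝ) - 1) := twoPow_mono (by linarith)
        exact absurd (hj.trans_le (hk2.trans h3)) (lt_irrefl _)
      have hR : (j : ℝ) ≤ k + 2 := by exact_mod_cast hjk
      have habs : |(j : ℝ) - ((k + 2 : ℤ) : ℝ)| = k + 2 - j := by
        push_cast
        rw [abs_of_nonpos (by linarith)]; ring
      rw [habs]
      have h5 : twoPow (k * (q - 1)) ≤ g y ^ (q - 1) := by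
        rw [← twoPow_rpow]; exact ENNReal.rpow_le_rpow hk1.le hq1.le
      calc twoPow (j * (q - 1)) * g y
          = twoPow (2 * (q - 1)) * (twoPow (k * (q - 1)) * g y) *
              twoPow (-((q - 1) * (k + 2 - j))) := by
            rw [show (j : ℝ) * (q - 1) = 2 * (q - 1) + k * (q - 1) + -((q - 1) * (k + 2 - j)) by ring,
              twoPow_add, twoPow_add]; ring
        _ ≤ _ := by gcongr
    · rw [indicator_of_notMem (by exact hj), mul_zero]; exact zero_le
  calc ∫⁻ x, maxFn g x ^ q ≤ ∫⁻ x, ∑' j : ℤ, {x | twoPow j < maxFn g x}.indicator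
        (fun _ => twoPow ((j + 1) * q)) x := lintegral_mono hpt
    _ = ∑' j : ℤ, twoPow ((j + 1) * q) * volume {x | twoPow j < maxFn g x} := by
        rw [lintegral_tsum fun j => (measurable_const.indicator (hms j)).aemeasurable]
        congr 1 with j
        rw [lintegral_indicator_const (hms j)]
    _ ≤ ∑' j : ℤ, twoPow ((j + 1) * q) * (twoPow (2 * n + 1 - j) *
          ∫⁻ y, {y | twoPow ((j : ℝ) - 1) < g y}.indicator g y) := by
        gcongr with j; exact weak_type' hn hg j
    _ = twoPow (2 * n + 1 + q) * ∑' j : ℤ, ∫⁻ y, twoPow (j * (q - 1)) *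
          {y | twoPow ((j : ℝ) - 1) < g y}.indicator g y := by
        rw [← ENNReal.tsum_mul_left]
        congr 1 with j
        rw [lintegral_const_mul _ (hg.indicator (hms' j)), ← mul_assoc, ← mul_assoc,
          ← twoPow_add, ← twoPow_add]
        ring_nf
    _ = twoPow (2 * n + 1 + q) * ∫⁻ y, ∑' j : ℤ, twoPow (j * (q - 1)) *
          {y | twoPow ((j : ℝ) - 1) < g y}.indicator g y := by
        rw [lintegral_tsum fun j => ((hg.indicator (hms' j)).const_mul _).aemeasurable]
    _ ≤ twoPow (2 * n + 1 + q) * ∫⁻ y, twoPow (2 * (q - 1)) * geomZ (q - 1) * g y ^ q := by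
        gcongr 1; exact lintegral_mono hsum
    _ = _ := by rw [lintegral_const_mul _ (hg.pow_const q)]; ring

/-! ### Log-Hölder exponents -/

/-- An integrable weight `(e + |x|) ^ (-(n + 1))`, the error term produced by comparing a
variable exponent with its value at infinity. -/
def decay (x : Eu n) : ℝ≥0∞ :=
  ENNReal.ofReal ((Real.exp 1 + ‖x‖) ^ (-((n : ℝ) + 1)))

theorem measurable_decay : Measurable (decay (n := n)) := by
  unfold decay
  fun_prop

theorem lintegral_decay_ne_top : ∫⁻ x : Eu n, decay x ≠ ∞ := by
  have h := finite_integral_one_add_norm (E := Eu n) (μ := volume) (r := (n : ℝ) + 1) (by simp)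
  refine (lt_of_le_of_lt (lintegral_mono fun x => ?_) h).ne
  unfold decay
  refine ENNReal.ofReal_le_ofReal ?_
  refine Real.rpow_le_rpow_of_nonpos (by positivity) ?_ (by linarith [n.cast_nonneg (α := ℝ)])
  have := Real.add_one_le_exp (1 : ℝ)
  linarith

/-- Comparison of two exponents that differ by `O(1 / log (e + |x|))`: for `t ≤ 1` one may
replace `e` by `e'` at the cost of a constant and an integrable error. -/
theorem rpow_le_conv {x : Eu n} {t : ℝ≥0∞} (ht : t ≤ 1) {e e' e₀ L : ℝ} (he₀ : 0 < e₀)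
    (he : e₀ ≤ e) (hL : |e - e'| * Real.log (Real.exp 1 + ‖x‖) ≤ L) :
    t ^ e ≤ ENNReal.ofReal (Real.exp (L * ((n + 1) / e₀))) * t ^ e' + decay x := by
  rcases eq_or_ne t 0 with h0 | h0
  · rw [h0, ENNReal.zero_rpow_of_pos (by linarith)]; exact zero_le
  have htt : t ≠ ∞ := (ht.trans_lt ENNReal.one_lt_top).ne
  obtain ⟨τ, rfl⟩ : ∃ τ : ℝ, t = ENNReal.ofReal τ := ⟨t.toReal, (ENNReal.ofReal_toReal htt).symm⟩
  have hτ : 0 < τ := by simpa using h0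
  have hτ1 : τ ≤ 1 := by simpa using ht
  have hW1 : 1 < Real.exp 1 + ‖x‖ := by
    have := Real.add_one_lt_exp (one_ne_zero (α := ℝ))
    have := norm_nonneg x
    linarith
  have hdec : decay x = ENNReal.ofReal ((Real.exp 1 + ‖x‖) ^ (-((n : ℝ) + 1))) := rfl
  set W := Real.exp 1 + ‖x‖ with hW
  have hW0 : 0 < W := by linarith
  have hθ : 0 < ((n : ℝ) + 1) / e₀ := by positivity
  set θ := ((n : ℝ) + 1) / e₀ with hθd
  rw [ENNReal.ofReal_rpow_of_pos hτ, ENNReal.ofReal_rpow_of_pos hτ]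
  rcases le_or_gt (W ^ (-θ)) τ with hc | hc
  · refine le_trans ?_ le_self_add
    rw [← ENNReal.ofReal_mul (by positivity)]
    refine ENNReal.ofReal_le_ofReal ?_
    have h1 : τ ^ e = τ ^ (e - e') * τ ^ e' := by rw [← Real.rpow_add hτ]; ring_nf
    rw [h1]
    gcongr
    calc τ ^ (e - e') ≤ τ ^ (-|e - e'|) :=
          Real.rpow_le_rpow_of_exponent_ge hτ hτ1 (neg_abs_le _)
      _ ≤ (W ^ (-θ)) ^ (-|e - e'|) :=
          Real.rpow_le_rpow_of_nonpos (by positivity) hc (by simp)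
      _ = Real.exp (|e - e'| * Real.log W * θ) := by
          rw [← Real.rpow_mul hW0.le, Real.rpow_def_of_pos hW0]; ring_nf
      _ ≤ Real.exp (L * θ) := by gcongr
  · refine le_trans ?_ le_add_self
    rw [hdec]
    refine ENNReal.ofReal_le_ofReal ?_
    calc τ ^ e ≤ (W ^ (-θ)) ^ e := Real.rpow_le_rpow hτ.le hc.le (by linarith)
      _ = W ^ (-θ * e) := by rw [← Real.rpow_mul hW0.le]
      _ ≤ W ^ (-((n : ℝ) + 1)) := by
          refine Real.rpow_le_rpow_of_exponent_le hW1.le ?_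
          have : (n : ℝ) + 1 = θ * e₀ := by rw [hθd]; field_simp
          rw [this]
          nlinarith

/-- The quantitative content of the hypotheses on one exponent `r`: the bounds
`1 < q ≤ r ≤ Bd`, the value `pInf` at infinity, and the log-Hölder conditions with constant `L`,
the local one being phrased on dyadic balls of radius at most one. -/
structure ExpData (r : Eu n → ℝ) (q pInf Bd L : ℝ) : Prop where
  meas : Measurable r
  one_lt : 1 < q
  q_le : ∀ x, q ≤ r x
  q_le_inf : q ≤ pInf
  le_Bd : ∀ x, r x ≤ Bd
  L_nonneg : 0 ≤ L
  loc : ∀ (x y : Eu n) (k : ℤ), k ≤ 0 → y ∈ dball k x → -(k : ℝ) * |r x - r y| ≤ L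
  inf : ∀ x, |r x - pInf| * Real.log (Real.exp 1 + ‖x‖) ≤ L

/-- Truncation at height `l`, a substitute for Jensen's inequality. -/
theorem le_add_rpow_mul {z l : ℝ≥0∞} (hl0 : l ≠ 0) (hlt : l ≠ ∞) {e : ℝ} (he : 1 ≤ e) :
    z ≤ l + l ^ (1 - e) * z ^ e := by
  rcases le_or_gt z l with h | h
  · exact h.trans le_self_add
  refine le_trans ?_ le_add_self
  rcases eq_or_ne z ∞ with hz | hz
  · rw [hz, ENNReal.top_rpow_of_pos (by linarith), ENNReal.mul_top]
    exact (ENNReal.rpow_pos (pos_iff_ne_zero.2 hl0) hlt).ne'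
  have hz0 : z ≠ 0 := (pos_iff_ne_zero.2 hl0).trans h |>.ne'
  calc z = z ^ (1 - e) * z ^ e := by rw [← ENNReal.rpow_add _ _ hz0 hz]; simp
    _ ≤ l ^ (1 - e) * z ^ e := by
      gcongr ?_ * _
      rw [show 1 - e = -(e - 1) by ring, ENNReal.rpow_neg, ENNReal.rpow_neg]
      exact ENNReal.inv_le_inv.2 (ENNReal.rpow_le_rpow h.le (by linarith))

section

variable {r : Eu n → ℝ} {q pInf Bd L : ℝ}

/-- On small balls, averages of the unit ball of `L^{r(·)}` are `O(|B| ^ (-1 / r x))`. -/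
theorem ballAvg_le_twoPow_local (hr : ExpData r q pInf Bd L) {g : Eu n → ℝ≥0∞}
    (hg : Measurable g) (hg1 : ∫⁻ y, g y ^ r y ≤ 1) (x : Eu n) {k : ℤ} (hk : k ≤ 0) :
    ballAvg k g x ≤ (1 + (unitVol n)⁻¹ * twoPow (n * L)) * twoPow (-(k * n)) ^ (r x)⁻¹ := by
  have hp1 : 1 < r x := hr.one_lt.trans_le (hr.q_le x)
  have hp0 : r x ≠ 0 := by linarith
  have hkR : (k : ℝ) ≤ 0 := by exact_mod_cast hk
  set l := twoPow (-(k * n)) ^ (r x)⁻¹ with hl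
  have hl' : l = twoPow (-(k * n) * (r x)⁻¹) := by rw [hl, twoPow_rpow]
  set c := twoPow (n * L) * (l * twoPow (k * n)) with hc
  have hpt : ∀ y ∈ dball k x, g y ≤ l + c * g y ^ r y := by
    intro y hy
    refine (le_add_rpow_mul (l := l) (by rw [hl']; exact twoPow_ne_zero _)
      (by rw [hl']; exact twoPow_ne_top _) (hr.one_lt.le.trans (hr.q_le y))).trans ?_
    gcongr
    rw [hc, hl', twoPow_rpow, ← twoPow_add, ← twoPow_add]
    refine twoPow_mono ?_
    have h1 := hr.loc x y k hk hy
    have h2' : (k : ℝ) * (r y - r x) ≤ L * r x := by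
      have h4 : -(r y - r x) ≤ |r x - r y| := by rw [abs_sub_comm]; exact neg_le_abs _
      have := hr.L_nonneg
      nlinarith
    have h5 : (k : ℝ) * (r y - r x) * (r x)⁻¹ ≤ L := by
      rw [mul_inv_le_iff₀ (by linarith)]; exact h2'
    have hn0 : (0 : ℝ) ≤ n := n.cast_nonneg
    have h6 : -((k : ℝ) * n) * (r x)⁻¹ * (1 - r y) =
        n * ((k : ℝ) * (r y - r x) * (r x)⁻¹) + (-(k * n) * (r x)⁻¹ + k * n) := by
      field_simp; ring
    rw [h6]
    gcongr
  calc ballAvg k g x ≤ ballAvg k (fun y => l + c * g y ^ r y) x := ballAvg_mono_on k x hpt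
    _ = l + c * ballAvg k (fun y => g y ^ r y) x := by
      rw [ballAvg_add k measurable_const, ballAvg_const, ballAvg_const_mul k (hg.pow hr.meas)]
    _ ≤ l + c * ((unitVol n)⁻¹ * twoPow (-(k * n)) * 1) := by
      gcongr
      exact (ballAvg_le_lintegral k _ x).trans (by gcongr)
    _ = l + twoPow (n * L) * l * (unitVol n)⁻¹ * (twoPow (k * n) * twoPow (-(k * n))) := by
      rw [hc]; ring
    _ = _ := by rw [twoPow_mul_neg]; ring

/-- The local Jensen-type estimate: for `f` with values in `{0} ∪ (1, ∞]`, an average of `f` over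
a small ball is controlled by the average of `f ^ (r / q)`. -/
theorem ballAvg_le_jensen (hr : ExpData r q pInf Bd L) {f : Eu n → ℝ≥0∞}
    (hf : Measurable f) (hf1 : ∫⁻ y, f y ^ r y ≤ 1) (hfv : ∀ y, f y = 0 ∨ 1 < f y)
    (x : Eu n) {k : ℤ} (hk : k ≤ 0) :
    ballAvg k f x ≤ (1 + (max 1 (unitVol n)⁻¹) ^ Bd * twoPow (n * L)) *
      (ballAvg k (fun y => f y ^ (r y / q)) x ^ q) ^ (r x)⁻¹ := by
  have hq0 : 0 < q := by linarith [hr.one_lt]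
  have he : ∀ y, 1 ≤ r y / q := fun y => (one_le_div hq0).2 (hr.q_le y)
  have hkR : (k : ℝ) ≤ 0 := by exact_mod_cast hk
  have hn0 : (0 : ℝ) ≤ n := n.cast_nonneg
  set F := fun y => f y ^ (r y / q) with hF
  have hFm : Measurable F := hf.pow (hr.meas.div_const q)
  set A := ballAvg k F x with hA
  set V' := max 1 (unitVol n)⁻¹ with hV'
  have hV't : V' ≠ ∞ := by
    rw [hV']; exact (max_lt ENNReal.one_lt_top (ENNReal.inv_lt_top.2 (pos_iff_ne_zero.2 unitVol_ne_zero))).ne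
  have hV'1 : 1 ≤ V' := le_max_left _ _
  set e := r x / q with hed
  have he1 : 1 ≤ e := he x
  have hexp : (A ^ q) ^ (r x)⁻¹ = A ^ e⁻¹ := by
    rw [← ENNReal.rpow_mul, hed, inv_div]; rfl
  rw [hexp]
  have hfF : ∀ y, f y ≤ F y := by
    intro y
    rcases hfv y with h | h
    · rw [h]; exact zero_le
    · calc f y = f y ^ (1 : ℝ) := (ENNReal.rpow_one _).symm
        _ ≤ F y := ENNReal.rpow_le_rpow_of_exponent_le h.le (he y)
  rcases le_or_gt A 1 with hA1 | hA1
  · calc ballAvg k f x ≤ A := ballAvg_mono k x hfF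
      _ = A ^ (1 : ℝ) := (ENNReal.rpow_one _).symm
      _ ≤ A ^ e⁻¹ := ENNReal.rpow_le_rpow_of_exponent_ge hA1 (inv_le_one_of_one_le₀ he1)
      _ ≤ _ := le_mul_of_one_le_left zero_le le_self_add
  have hFr : ∀ y, F y ≤ f y ^ r y := by
    intro y
    rcases hfv y with h | h
    · simp only [hF]
      rw [h, ENNReal.zero_rpow_of_pos (by linarith [he y])]; exact zero_le
    · refine ENNReal.rpow_le_rpow_of_exponent_le h.le ?_
      exact div_le_self (by linarith [hr.q_le y]) hr.one_lt.le
  have hAle : A ≤ V' * twoPow (-(k * n)) := by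
    calc A ≤ (unitVol n)⁻¹ * twoPow (-(k * n)) * ∫⁻ y, f y ^ r y :=
          (ballAvg_mono k x hFr).trans (ballAvg_le_lintegral k _ x)
      _ ≤ V' * twoPow (-(k * n)) * 1 := by gcongr; exact le_max_right _ _
      _ = _ := mul_one _
  have hAt : A ≠ ∞ := (hAle.trans_lt (ENNReal.mul_lt_top hV't.lt_top (twoPow_ne_top _).lt_top)).ne
  have hA0 : A ≠ 0 := (zero_lt_one.trans hA1).ne'
  set l := A ^ e⁻¹ with hl
  have hl1 : 1 ≤ l := ENNReal.one_le_rpow hA1.le (by positivity)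
  have hlA : l ≤ A := by
    calc l ≤ A ^ (1 : ℝ) := ENNReal.rpow_le_rpow_of_exponent_le hA1.le (inv_le_one_of_one_le₀ he1)
      _ = A := ENNReal.rpow_one _
  have hl0 : l ≠ 0 := (zero_lt_one.trans_le hl1).ne'
  have hlt : l ≠ ∞ := (hlA.trans_lt hAt.lt_top).ne
  have hle : l ^ e = A := by
    rw [hl, ← ENNReal.rpow_mul, inv_mul_cancel₀ (by linarith), ENNReal.rpow_one]
  set T := V' ^ Bd * twoPow (n * L) with hT
  have hpt : ∀ y ∈ dball k x, f y ≤ l + T * l ^ (1 - e) * F y := by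
    intro y hy
    refine (le_add_rpow_mul hl0 hlt (he y)).trans ?_
    gcongr
    have h1 : l ^ (1 - r y / q) = l ^ (e - r y / q) * l ^ (1 - e) := by
      rw [← ENNReal.rpow_add _ _ hl0 hlt]; ring_nf
    rw [h1]
    gcongr
    have h2 : |e - r y / q| ≤ |r x - r y| := by
      rw [hed, ← sub_div, abs_div, abs_of_pos hq0]
      exact div_le_self (abs_nonneg _) hr.one_lt.le
    have h3 : |r x - r y| ≤ Bd := by
      rw [abs_le]
      constructor <;> linarith [hr.le_Bd x, hr.le_Bd y, hr.q_le x, hr.q_le y]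
    have h4 := hr.loc x y k hk hy
    calc l ^ (e - r y / q) ≤ l ^ |r x - r y| :=
          ENNReal.rpow_le_rpow_of_exponent_le hl1 ((le_abs_self _).trans h2)
      _ ≤ (V' * twoPow (-(k * n))) ^ |r x - r y| :=
          ENNReal.rpow_le_rpow (hlA.trans hAle) (abs_nonneg _)
      _ = V' ^ |r x - r y| * twoPow (n * (-k * |r x - r y|)) := by
          rw [ENNReal.mul_rpow_of_nonneg _ _ (abs_nonneg _), twoPow_rpow]; ring_nf
      _ ≤ T := by
          rw [hT]
          exact mul_le_mul' (ENNReal.rpow_le_rpow_of_exponent_le hV'1 h3)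
            (twoPow_mono (by gcongr))
  calc ballAvg k f x ≤ ballAvg k (fun y => l + T * l ^ (1 - e) * F y) x := ballAvg_mono_on k x hpt
    _ = l + T * (l ^ (1 - e) * l ^ e) := by
      rw [ballAvg_add k measurable_const, ballAvg_const, ballAvg_const_mul k hFm, hle]; ring
    _ = _ := by rw [← ENNReal.rpow_add _ _ hl0 hlt]; simp; ring

/-! ### Majorants for averages over balls -/

/-- The linear estimate behind the theorem. For `g` in the unit ball of `L^{r(·)}` there is an
integrable majorant `H` such that the averages of `g` over the balls `B(x, 2 ^ k)` are
`O(min (H x) (2 ^ (-k n)) ^ (1 / r x))` for small balls, and satisfy the same bound with the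
exponent at infinity for large balls. -/
theorem exists_majorant (hn : 0 < n) (hr : ExpData r q pInf Bd L) :
    ∃ C : ℝ≥0∞, C ≠ ∞ ∧ ∀ g : Eu n → ℝ≥0∞, Measurable g → ∫⁻ y, g y ^ r y ≤ 1 →
      ∃ H : Eu n → ℝ≥0∞, Measurable H ∧ ∫⁻ x, H x ≤ C ∧
        (∀ x (k : ℤ), k ≤ 0 → ballAvg k g x ≤ C * min (H x) (twoPow (-(k * n))) ^ (r x)⁻¹) ∧
        (∀ x (k : ℤ), 0 ≤ k → ballAvg k g x ≤ C * min (H x) (twoPow (-(k * n))) ^ pInf⁻¹) := by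
  have hq1 := hr.one_lt
  have hq0 : 0 < q := by linarith
  have hp1 : 1 < pInf := hq1.trans_le hr.q_le_inf
  have hp0 : 0 < pInf := by linarith
  have hr1 : ∀ x, 1 < r x := fun x => hq1.trans_le (hr.q_le x)
  have hr0 : ∀ x, 0 < r x := fun x => by linarith [hr1 x]
  obtain ⟨C₁, hC₁, hM₁⟩ := strong_type hn hq1
  obtain ⟨C₂, hC₂, hM₂⟩ := strong_type hn hp1
  set K : ℝ≥0∞ := ENNReal.ofReal (Real.exp (L * ((n + 1) / q))) with hK
  have hKt : K ≠ ∞ := ENNReal.ofReal_ne_top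
  have hK1 : 1 ≤ K := by
    rw [hK, ← ENNReal.ofReal_one]
    refine ENNReal.ofReal_le_ofReal (Real.one_le_exp ?_)
    have := hr.L_nonneg
    positivity
  set D : ℝ≥0∞ := ∫⁻ x : Eu n, decay x with hD
  have hDt : D ≠ ∞ := lintegral_decay_ne_top
  set Vi := (unitVol n)⁻¹ with hVi
  have hVit : Vi ≠ ∞ := ENNReal.inv_ne_top.2 unitVol_ne_zero
  set V' := max 1 Vi with hV'
  have hV't : V' ≠ ∞ := (max_lt ENNReal.one_lt_top hVit.lt_top).ne
  have hV'1 : 1 ≤ V' := le_max_left _ _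
  have hV'0 : V' ≠ 0 := (zero_lt_one.trans_le hV'1).ne'
  set T₁ := 1 + V' ^ Bd * twoPow (n * L) with hT₁
  set T₂ := 1 + Vi * twoPow (n * L) with hT₂
  set T₃ := 1 + Vi * (K + D) with hT₃
  have hBd : 0 ≤ Bd := by linarith [hr0 0, hr.le_Bd 0]
  have hT₁t : T₁ ≠ ∞ := ENNReal.add_ne_top.2 ⟨ENNReal.one_ne_top, ENNReal.mul_ne_top
    (ENNReal.rpow_ne_top_of_nonneg hBd hV't) (twoPow_ne_top _)⟩
  have hT₂t : T₂ ≠ ∞ := ENNReal.add_ne_top.2 ⟨ENNReal.one_ne_top, ENNReal.mul_ne_top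
    hVit (twoPow_ne_top _)⟩
  have hT₃t : T₃ ≠ ∞ := ENNReal.add_ne_top.2 ⟨ENNReal.one_ne_top, ENNReal.mul_ne_top
    hVit (ENNReal.add_ne_top.2 ⟨hKt, hDt⟩)⟩
  set S := C₁ + K * (C₂ * (K + D)) + D with hS
  have hSt : S ≠ ∞ := by
    rw [hS]
    exact ENNReal.add_ne_top.2 ⟨ENNReal.add_ne_top.2 ⟨hC₁, ENNReal.mul_ne_top hKt
      (ENNReal.mul_ne_top hC₂ (ENNReal.add_ne_top.2 ⟨hKt, hDt⟩))⟩, hDt⟩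
  refine ⟨max (max S (T₁ + 1)) (max T₂ (max (V' + 1) (Vi + T₃))), ?_, ?_⟩
  · have h1 : ∀ a : ℝ≥0∞, a ≠ ∞ → a + 1 < ∞ := fun a ha =>
      ENNReal.add_lt_top.2 ⟨ha.lt_top, ENNReal.one_lt_top⟩
    exact (max_lt (max_lt hSt.lt_top (h1 _ hT₁t)) (max_lt hT₂t.lt_top (max_lt (h1 _ hV't)
      (ENNReal.add_lt_top.2 ⟨hVit.lt_top, hT₃t.lt_top⟩)))).ne
  intro g hg hg1
  -- Split `g` into its large part `f₁` and its small part `f₂`.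
  have hset : MeasurableSet {y | 1 < g y} := measurableSet_lt measurable_const hg
  set f₁ := {y | 1 < g y}.indicator g with hf₁
  set f₂ := {y | 1 < g y}ᶜ.indicator g with hf₂
  have hf₁m : Measurable f₁ := hg.indicator hset
  have hf₂m : Measurable f₂ := hg.indicator hset.compl
  have hsplit : g = fun y => f₁ y + f₂ y := by
    ext y; exact (congrFun (indicator_self_add_compl {y | 1 < g y} g) y).symm
  have hf₁g : ∀ y, f₁ y ≤ g y := indicator_le_self _ _
  have hf₂g : ∀ y, f₂ y ≤ g y := indicator_le_self _ _
  have hf₁v : ∀ y, f₁ y = 0 ∨ 1 < f₁ y := by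
    intro y
    by_cases h : 1 < g y
    · right; rw [hf₁, indicator_of_mem (by exact h)]; exact h
    · left; rw [hf₁, indicator_of_notMem (by exact h)]
  have hf₂1 : ∀ y, f₂ y ≤ 1 := by
    intro y
    by_cases h : 1 < g y
    · rw [hf₂, indicator_of_notMem (by simpa using h)]; exact zero_le
    · exact (hf₂g y).trans (not_lt.1 h)
  have hf₁r : ∫⁻ y, f₁ y ^ r y ≤ 1 := le_trans (lintegral_mono fun y =>
    ENNReal.rpow_le_rpow (hf₁g y) (hr0 y).le) hg1
  have hf₂r : ∫⁻ y, f₂ y ^ r y ≤ 1 := le_trans (lintegral_mono fun y =>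
    ENNReal.rpow_le_rpow (hf₂g y) (hr0 y).le) hg1
  set F := fun y => f₁ y ^ (r y / q) with hF
  have hFm : Measurable F := hf₁m.pow (hr.meas.div_const q)
  have hFq : ∀ y, F y ^ q = f₁ y ^ r y := by
    intro y; simp only [hF]; rw [← ENNReal.rpow_mul, div_mul_cancel₀ _ hq0.ne']
  have hf₁F : ∀ y, f₁ y ≤ F y := by
    intro y
    rcases hf₁v y with h | h
    · rw [h]; exact zero_le
    · calc f₁ y = f₁ y ^ (1 : ℝ) := (ENNReal.rpow_one _).symm
        _ ≤ F y := ENNReal.rpow_le_rpow_of_exponent_le h.le ((one_le_div hq0).2 (hr.q_le y))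
  have hf₁L1 : ∫⁻ y, f₁ y ≤ 1 := by
    refine le_trans (lintegral_mono fun y => ?_) hf₁r
    rcases hf₁v y with h | h
    · rw [h]; exact zero_le
    · calc f₁ y = f₁ y ^ (1 : ℝ) := (ENNReal.rpow_one _).symm
        _ ≤ f₁ y ^ r y := ENNReal.rpow_le_rpow_of_exponent_le h.le (hr1 y).le
  have hf₂p : ∫⁻ y, f₂ y ^ pInf ≤ K + D := by
    calc ∫⁻ y, f₂ y ^ pInf ≤ ∫⁻ y, (K * f₂ y ^ r y + decay y) := by
          refine lintegral_mono fun y => ?_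
          refine rpow_le_conv (hf₂1 y) hq0 hr.q_le_inf ?_
          rw [abs_sub_comm]; exact hr.inf y
      _ = K * (∫⁻ y, f₂ y ^ r y) + D := by
          rw [lintegral_add_right _ measurable_decay, lintegral_const_mul _ (hf₂m.pow hr.meas)]
      _ ≤ K * 1 + D := by gcongr
      _ = K + D := by rw [mul_one]
  set G := maxFn F with hG
  set M := maxFn f₂ with hM
  set H := fun x => G x ^ q + K * M x ^ pInf + decay x with hH
  have hGm : Measurable G := measurable_maxFn hFm
  have hMm : Measurable M := measurable_maxFn hf₂m
  have hHG : ∀ x, G x ^ q ≤ H x := fun x => by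
    simp only [hH, add_assoc]; exact le_self_add
  have hHM : ∀ x, K * M x ^ pInf + decay x ≤ H x := fun x => by
    simp only [hH, add_assoc]; exact le_add_self
  have hHM' : ∀ x, M x ^ pInf ≤ H x := fun x =>
    (le_mul_of_one_le_left zero_le hK1).trans (le_self_add.trans (hHM x))
  have key : ∀ {a h b T T' C : ℝ≥0∞} {p : ℝ}, a ≤ T * h ^ p → a ≤ T' * b ^ p → T ≤ C → T' ≤ C →
      a ≤ C * min h b ^ p := by
    intro a h b T T' C p h1 h2 h3 h4
    rcases min_choice h b with h5 | h5 <;> rw [h5]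
    · exact h1.trans (by gcongr)
    · exact h2.trans (by gcongr)
  refine ⟨H, ((hGm.pow_const q).add ((hMm.pow_const pInf).const_mul K)).add measurable_decay,
    ?_, ?_, ?_⟩
  · refine le_trans ?_ ((le_max_left S _).trans (le_max_left _ _))
    calc ∫⁻ x, H x = (∫⁻ x, G x ^ q) + K * (∫⁻ x, M x ^ pInf) + D := by
          simp only [hH]
          rw [lintegral_add_right _ measurable_decay, lintegral_add_left (hGm.pow_const q),
            lintegral_const_mul _ (hMm.pow_const pInf)]
      _ ≤ C₁ * 1 + K * (C₂ * (K + D)) + D := by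
          gcongr
          · refine (hM₁ F hFm).trans ?_
            gcongr
            simp_rw [hFq]; exact hf₁r
          · exact (hM₂ f₂ hf₂m).trans (by gcongr)
      _ = S := by rw [mul_one, hS]
  · intro x k hk
    have h1 : ballAvg k f₁ x ≤ T₁ * H x ^ (r x)⁻¹ := by
      refine (ballAvg_le_jensen hr hf₁m hf₁r hf₁v x hk).trans ?_
      refine mul_le_mul' le_rfl (ENNReal.rpow_le_rpow ?_ (inv_nonneg.2 (hr0 x).le))
      exact (ENNReal.rpow_le_rpow (ballAvg_le_maxFn k F x) hq0.le).trans (hHG x)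
    have h2 : ballAvg k f₂ x ≤ 1 * H x ^ (r x)⁻¹ := by
      rw [one_mul, ENNReal.le_rpow_inv_iff (hr0 x)]
      have h3 : ballAvg k f₂ x ≤ 1 :=
        (ballAvg_mono k x hf₂1).trans (ballAvg_const k 1 x).le
      refine (rpow_le_conv h3 hq0 (hr.q_le x) (hr.inf x)).trans (le_trans ?_ (hHM x))
      gcongr
      exact ballAvg_le_maxFn k f₂ x
    refine key (T := T₁ + 1) (T' := T₂) ?_ (ballAvg_le_twoPow_local hr hg hg1 x hk)
      ((le_max_right _ _).trans (le_max_left _ _)) ((le_max_left _ _).trans (le_max_right _ _))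
    rw [hsplit, ballAvg_add k hf₁m, add_mul]
    exact add_le_add h1 h2
  · intro x k hk
    have hkR : (0 : ℝ) ≤ k := by exact_mod_cast hk
    have hn0 : (0 : ℝ) ≤ n := n.cast_nonneg
    have hkn : -((k : ℝ) * n) ≤ 0 := by have := mul_nonneg hkR hn0; linarith
    have hb1 : ballAvg k f₁ x ≤ Vi * twoPow (-(k * n)) :=
      (ballAvg_le_lintegral k f₁ x).trans (by
        calc Vi * twoPow (-(k * n)) * ∫⁻ y, f₁ y ≤ Vi * twoPow (-(k * n)) * 1 := by gcongr
          _ = _ := mul_one _)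
    set l := twoPow (-(k * n)) ^ pInf⁻¹ with hl
    have hl' : l = twoPow (-(k * n) * pInf⁻¹) := by rw [hl, twoPow_rpow]
    have hl0 : l ≠ 0 := by rw [hl']; exact twoPow_ne_zero _
    have hlt : l ≠ ∞ := by rw [hl']; exact twoPow_ne_top _
    have hs1 : ballAvg k f₁ x ≤ Vi * l := by
      refine hb1.trans (mul_le_mul' le_rfl ?_)
      rw [hl']
      refine twoPow_mono ?_
      have : pInf⁻¹ ≤ 1 := inv_le_one_of_one_le₀ hp1.le
      nlinarith
    have hs2 : ballAvg k f₂ x ≤ T₃ * l := by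
      calc ballAvg k f₂ x ≤ ballAvg k (fun y => l + l ^ (1 - pInf) * f₂ y ^ pInf) x :=
            ballAvg_mono k x fun y => le_add_rpow_mul hl0 hlt hp1.le
        _ = l + l ^ (1 - pInf) * ballAvg k (fun y => f₂ y ^ pInf) x := by
            rw [ballAvg_add k measurable_const, ballAvg_const,
              ballAvg_const_mul k (hf₂m.pow_const _)]
        _ ≤ l + l ^ (1 - pInf) * (Vi * twoPow (-(k * n)) * (K + D)) := by
            gcongr
            exact (ballAvg_le_lintegral k _ x).trans (by gcongr)
        _ = l + Vi * (K + D) * (l ^ (1 - pInf) * l ^ pInf) := by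
            have : l ^ pInf = twoPow (-(k * n)) := by
              rw [hl, ← ENNReal.rpow_mul, inv_mul_cancel₀ hp0.ne', ENNReal.rpow_one]
            rw [this]; ring
        _ = T₃ * l := by rw [← ENNReal.rpow_add _ _ hl0 hlt, hT₃]; simp; ring
    have hH1 : ballAvg k f₁ x ≤ V' * H x ^ pInf⁻¹ := by
      have h1 : ballAvg k f₁ x ≤ V' := by
        refine hb1.trans ?_
        calc Vi * twoPow (-(k * n)) ≤ V' * 1 :=
              mul_le_mul' (le_max_right _ _) (twoPow_le_one hkn)
          _ = V' := mul_one _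
      have h2 : V'⁻¹ * ballAvg k f₁ x ≤ 1 := by
        calc V'⁻¹ * ballAvg k f₁ x ≤ V'⁻¹ * V' := by gcongr
          _ = 1 := ENNReal.inv_mul_cancel hV'0 hV't
      have h3 : V'⁻¹ * ballAvg k f₁ x ≤ H x ^ pInf⁻¹ := by
        rw [ENNReal.le_rpow_inv_iff hp0]
        refine le_trans ?_ (hHG x)
        refine (ENNReal.rpow_le_rpow_of_exponent_ge h2 hr.q_le_inf).trans ?_
        refine ENNReal.rpow_le_rpow ?_ hq0.le
        calc V'⁻¹ * ballAvg k f₁ x ≤ 1 * ballAvg k f₁ x := by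
              gcongr; exact ENNReal.inv_le_one.2 hV'1
          _ ≤ ballAvg k F x := by rw [one_mul]; exact ballAvg_mono k x hf₁F
          _ ≤ G x := ballAvg_le_maxFn k F x
      calc ballAvg k f₁ x = V' * (V'⁻¹ * ballAvg k f₁ x) := by
            rw [← mul_assoc, ENNReal.mul_inv_cancel hV'0 hV't, one_mul]
        _ ≤ _ := by gcongr
    have hH2 : ballAvg k f₂ x ≤ 1 * H x ^ pInf⁻¹ := by
      rw [one_mul, ENNReal.le_rpow_inv_iff hp0]
      exact (ENNReal.rpow_le_rpow (ballAvg_le_maxFn k f₂ x) hp0.le).trans (hHM' x)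
    refine key (T := V' + 1) (T' := Vi + T₃) ?_ ?_
      ((le_max_left _ _).trans ((le_max_right _ _).trans (le_max_right _ _)))
      ((le_max_right _ _).trans ((le_max_right _ _).trans (le_max_right _ _)))
    · rw [hsplit, ballAvg_add k hf₁m, add_mul]; exact add_le_add hH1 hH2
    · rw [hsplit, ballAvg_add k hf₁m, add_mul]; exact add_le_add hs1 hs2

/-! ### Extracting the value at infinity -/

/-- A sequence of points going to infinity along the first coordinate axis. -/
def axisPt (hn : 0 < n) (k : ℕ) : Eu n := EuclideanSpace.single ⟨0, hn⟩ (k : ℝ)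

theorem norm_axisPt (hn : 0 < n) (k : ℕ) : ‖axisPt hn k‖ = k := by
  simp [axisPt]

/-- The hypotheses on an exponent produce the data `ExpData`; the value at infinity is the limit
along `axisPt`. -/
theorem exists_expData (hn : 0 < n) (hr : Measurable r ∧ (∀ x, 1 < r x) ∧ 1 < essInf r volume ∧
      (∃ B : ℝ, ∀ x, r x ≤ B) ∧ LogHolder r) :
    ∃ q pInf Bd L : ℝ, ExpData r q pInf Bd L ∧
      Tendsto (fun k => r (axisPt hn k)) atTop (nhds pInf) := by
  obtain ⟨hm, h1, hess, ⟨Bd, hBd⟩, C, hloc, hinf⟩ := hr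
  have hlogpos : ∀ t : ℝ, 0 ≤ t → 0 < Real.log (Real.exp 1 + t) := fun t ht =>
    Real.log_pos (by linarith [Real.add_one_lt_exp (one_ne_zero (α := ℝ))])
  have hinf' : ∀ x y : Eu n, ‖x‖ ≤ ‖y‖ → |r x - r y| ≤ |C| / Real.log (Real.exp 1 + ‖x‖) := by
    intro x y hxy
    refine (hinf x y hxy).trans ?_
    have := hlogpos _ (norm_nonneg x)
    gcongr
    exact le_abs_self C
  have hcau : CauchySeq fun k => r (axisPt hn k) := by
    refine cauchySeq_of_le_tendsto_0 (fun N : ℕ => 2 * (|C| / Real.log (Real.exp 1 + N))) ?_ ?_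
    · intro a b N ha hb
      have e1 := hinf' (axisPt hn N) (axisPt hn a) (by simpa [norm_axisPt] using ha)
      have e2 := hinf' (axisPt hn N) (axisPt hn b) (by simpa [norm_axisPt] using hb)
      rw [norm_axisPt] at e1 e2
      calc dist (r (axisPt hn a)) (r (axisPt hn b))
          ≤ dist (r (axisPt hn N)) (r (axisPt hn a)) + dist (r (axisPt hn N)) (r (axisPt hn b)) :=
            dist_triangle_left _ _ _
        _ ≤ _ := by rw [Real.dist_eq, Real.dist_eq]; linarith
    · have : Tendsto (fun N : ℕ => Real.log (Real.exp 1 + N)) atTop atTop :=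
        Real.tendsto_log_atTop.comp (tendsto_atTop_add_const_left _ _ tendsto_natCast_atTop_atTop)
      simpa using (this.const_div_atTop |C|).const_mul 2
  obtain ⟨pInf, hp⟩ := cauchySeq_tendsto_of_complete hcau
  have hloc' : ∀ (x y : Eu n) (k : ℤ), k ≤ 0 → y ∈ dball k x → -(k : ℝ) * |r x - r y| ≤ 2 * |C| := by
    intro x y k hk hy
    rcases eq_or_lt_of_le hk with h0 | hk1
    · simp [h0]
    rcases eq_or_ne x y with hxy | hxy
    · simp [hxy]
    have hk2 : (k : ℝ) ≤ -1 := by exact_mod_cast (by omega : k ≤ -1)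
    have hd0 : 0 < dist x y := dist_pos.2 hxy
    have hd : dist x y ≤ 2 ^ (k : ℝ) := by rw [dist_comm]; exact hy
    have hhalf : dist x y ≤ 1 / 2 := by
      refine hd.trans ?_
      calc (2 : ℝ) ^ (k : ℝ) ≤ 2 ^ (-1 : ℝ) := Real.rpow_le_rpow_of_exponent_le (by norm_num) hk2
        _ = 1 / 2 := by rw [Real.rpow_neg_one]; norm_num
    have hlog : -(k : ℝ) * Real.log 2 ≤ -Real.log (dist x y) := by
      have := Real.log_le_log hd0 hd
      rw [Real.log_rpow (by norm_num)] at this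
      linarith
    have hl2 : (1 : ℝ) / 2 < Real.log 2 := by linarith [Real.log_two_gt_d9]
    have hpos : 0 < -Real.log (dist x y) := by nlinarith
    have h3 := hloc x y hhalf
    rw [le_div_iff₀ hpos] at h3
    have h4 := abs_nonneg (r x - r y)
    have h5 := le_abs_self C
    have h6 : |r x - r y| * (-(k : ℝ) * Real.log 2) ≤ C :=
      (mul_le_mul_of_nonneg_left hlog h4).trans h3
    have h7 : 0 ≤ |r x - r y| * -(k : ℝ) := mul_nonneg h4 (by linarith)
    nlinarith
  have hae : ∀ᵐ y, essInf r volume ≤ r y := by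
    refine ae_essInf_le ?_
    exact isBoundedUnder_of ⟨1, fun x => (h1 x).le⟩
  -- By continuity the essential infimum is a lower bound at every point.
  have hq : ∀ x, essInf r volume ≤ r x := by
    intro x
    by_contra hcon
    have hcon := not_le.1 hcon
    obtain ⟨N, hN⟩ := exists_nat_gt (2 * |C| / (essInf r volume - r x))
    have hδ : 0 < essInf r volume - r x := by linarith
    rw [div_lt_iff₀ hδ] at hN
    have hsub : dball (-(N : ℤ)) x ⊆ {y | ¬ essInf r volume ≤ r y} := by
      intro y hy
      have h2 := hloc' x y (-(N : ℤ)) (by simp) hy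
      push_cast at h2
      rw [neg_neg] at h2
      have h3 : (N : ℝ) * |r x - r y| < N * (essInf r volume - r x) := h2.trans_lt hN
      have h4 : |r x - r y| < essInf r volume - r x := lt_of_mul_lt_mul_left h3 N.cast_nonneg
      have h5 := neg_le_abs (r x - r y)
      show ¬ _
      rw [not_le]; linarith
    have h0 : volume (dball (-(N : ℤ)) x) = 0 := measure_mono_null hsub (ae_iff.1 hae)
    rw [volume_dball] at h0
    exact mul_ne_zero (twoPow_ne_zero _) unitVol_ne_zero h0
  refine ⟨essInf r volume, pInf, Bd, 2 * |C|, ⟨hm, hess, hq, ?_, hBd, by positivity, hloc', ?_⟩, hp⟩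
  · exact ge_of_tendsto' hp fun k => hq _
  · intro x
    have hpos := hlogpos _ (norm_nonneg x)
    have : |r x - pInf| ≤ |C| / Real.log (Real.exp 1 + ‖x‖) := by
      refine le_of_tendsto ((tendsto_const_nhds.sub hp).abs) ?_
      filter_upwards [eventually_ge_atTop ⌈‖x‖⌉₊] with k hk
      refine hinf' x _ ?_
      rw [norm_axisPt]
      exact (Nat.le_ceil _).trans (by exact_mod_cast hk)
    rw [le_div_iff₀ hpos] at this
    linarith [abs_nonneg C]

/-! ### Discretisation of the multilinear kernel -/

theorem lintegral_pi_prod {E : Type*} [MeasureSpace E] [SigmaFinite (volume : Measure E)] (m : ℕ)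
    (f : Fin m → E → ℝ≥0∞) (hf : ∀ i, Measurable (f i)) :
    ∫⁻ y : Fin m → E, ∏ i, f i (y i) = ∏ i, ∫⁻ y, f i y := by
  induction m with
  | zero => simp [volume_pi]
  | succ m ih =>
    have hmp := (volume_preserving_piFinSuccAbove (fun _ : Fin (m + 1) => E) 0).symm
    rw [← hmp.lintegral_comp_emb (MeasurableEquiv.measurableEmbedding _)]
    simp_rw [Fin.prod_univ_succ]
    have h1 : ∀ a : E × (Fin m → E),
        f 0 ((MeasurableEquiv.piFinSuccAbove (fun _ : Fin (m + 1) => E) 0).symm a 0) *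
          ∏ i : Fin m, f i.succ
            ((MeasurableEquiv.piFinSuccAbove (fun _ : Fin (m + 1) => E) 0).symm a i.succ)
        = f 0 a.1 * ∏ i : Fin m, f i.succ (a.2 i) := by
      intro a
      simp [MeasurableEquiv.piFinSuccAbove_symm_apply, Fin.insertNthEquiv]
    simp_rw [h1]
    rw [← ih (fun i => f i.succ) fun i => hf _]
    exact lintegral_prod_mul (hf 0).aemeasurable
      (Finset.measurable_prod _ fun i _ => (hf _).comp (measurable_pi_apply i)).aemeasurable

/-- The kernel is a superposition of normalised indicators of products of balls. On the diagonal
the left-hand side is the junk value `0`. -/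
theorem kernel_le {m : ℕ} {α : ℝ} (hα : α < m * n) (x : Eu n) (y : Fin m → Eu n) :
    ENNReal.ofReal (Real.sqrt (∑ i, ‖x - y i‖ ^ 2) ^ (α - m * n)) ≤
      twoPow (m * n - α) * ∑' k : ℤ, twoPow (k * α) *
        ∏ i, (twoPow (-(k * n)) * (dball k x).indicator (fun _ => 1) (y i)) := by
  have hexp : α - m * n < 0 := by linarith
  set D := Real.sqrt (∑ i, ‖x - y i‖ ^ 2) with hD
  have hD0 : 0 ≤ D := Real.sqrt_nonneg _
  rcases hD0.eq_or_lt with h0 | h0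
  · rw [← h0, Real.zero_rpow hexp.ne]; simp
  obtain ⟨k, hk1, hk2⟩ := exists_mem_Ioc_zpow h0 (one_lt_two (α := ℝ))
  rw [← Real.rpow_intCast] at hk1 hk2
  have hmem : ∀ i, y i ∈ dball (k + 1) x := by
    intro i
    rw [dball, Metric.mem_closedBall, dist_comm, dist_eq_norm]
    refine le_trans ?_ hk2
    rw [hD]
    refine Real.le_sqrt_of_sq_le ?_
    exact Finset.single_le_sum (f := fun i => ‖x - y i‖ ^ 2) (fun i _ => by positivity)
      (Finset.mem_univ i)
  calc ENNReal.ofReal (D ^ (α - m * n)) ≤ ENNReal.ofReal (((2 : ℝ) ^ (k : ℝ)) ^ (α - m * n)) :=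
        ENNReal.ofReal_le_ofReal (Real.rpow_le_rpow_of_nonpos (by positivity) hk1.le hexp.le)
    _ = twoPow (m * n - α) * (twoPow ((k + 1 : ℤ) * α) * ∏ i : Fin m, (twoPow (-((k + 1 : ℤ) * n)) *
          (dball (k + 1) x).indicator (fun _ => 1) (y i))) := by
        rw [← Real.rpow_mul (by norm_num), ofReal_two_rpow]
        have : ∀ i, (dball (k + 1) x).indicator (fun _ => (1 : ℝ≥0∞)) (y i) = 1 := fun i =>
          indicator_of_mem (hmem i) _
        simp only [this, mul_one, Finset.prod_const, Finset.card_univ, Fintype.card_fin]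
        rw [← ENNReal.rpow_natCast, twoPow_rpow, ← twoPow_add, ← twoPow_add]
        push_cast
        ring_nf
    _ ≤ _ := by
        gcongr
        exact ENNReal.le_tsum (f := fun k : ℤ => twoPow (k * α) *
          ∏ i, (twoPow (-(k * n)) * (dball k x).indicator (fun _ => 1) (y i))) (k + 1)

theorem potential_le {m : ℕ} {α : ℝ} (hα : α < m * n) (x : Eu n) (g : Fin m → Eu n → ℝ≥0∞)
    (hg : ∀ i, Measurable (g i)) :
    ∫⁻ y : Fin m → Eu n, ENNReal.ofReal (Real.sqrt (∑ i, ‖x - y i‖ ^ 2) ^ (α - m * n)) *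
      ∏ i, g i (y i) ≤
      twoPow (m * n - α) * unitVol n ^ m * ∑' k : ℤ, twoPow (k * α) * ∏ i, ballAvg k (g i) x := by
  set φ : ℤ → Fin m → Eu n → ℝ≥0∞ := fun k i z =>
    twoPow (-(k * n)) * (dball k x).indicator (g i) z with hφ
  have hφm : ∀ k i, Measurable (φ k i) := fun k i =>
    ((hg i).indicator (measurableSet_dball k x)).const_mul _
  have hPm : ∀ k, Measurable fun y : Fin m → Eu n => ∏ i, φ k i (y i) := fun k =>
    Finset.measurable_prod _ fun i _ => (hφm k i).comp (measurable_pi_apply i)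
  have hφi : ∀ k i, ∫⁻ z, φ k i z = unitVol n * ballAvg k (g i) x := by
    intro k i
    simp only [hφ]
    rw [lintegral_const_mul _ ((hg i).indicator (measurableSet_dball k x)),
      lintegral_indicator (measurableSet_dball k x), ballAvg, ← mul_assoc, ← mul_assoc,
      ENNReal.mul_inv_cancel unitVol_ne_zero unitVol_ne_top, one_mul]
  calc _ ≤ ∫⁻ y : Fin m → Eu n, twoPow (m * n - α) * ∑' k : ℤ, twoPow (k * α) *
        ∏ i, φ k i (y i) := by
        refine lintegral_mono fun y => ?_
        refine (mul_le_mul' (kernel_le hα x y) le_rfl).trans (le_of_eq ?_)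
        rw [mul_assoc, ← ENNReal.tsum_mul_right]
        congr 2 with k
        rw [mul_assoc, ← Finset.prod_mul_distrib]
        congr 1
        refine Finset.prod_congr rfl fun i _ => ?_
        by_cases h : y i ∈ dball k x <;> simp [hφ, h]
    _ = twoPow (m * n - α) * ∑' k : ℤ, twoPow (k * α) * ∏ i, (unitVol n * ballAvg k (g i) x) := by
        rw [lintegral_const_mul _ (Measurable.tsum fun k => (hPm k).const_mul _),
          lintegral_tsum fun k => ((hPm k).const_mul _).aemeasurable]
        congr 2 with k
        rw [lintegral_const_mul _ (hPm k), lintegral_pi_prod m _ (hφm k)]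
        simp_rw [hφi]
    _ = _ := by
        have hfac : ∑' k : ℤ, twoPow (k * α) * ∏ i, (unitVol n * ballAvg k (g i) x) =
            unitVol n ^ m * ∑' k : ℤ, twoPow (k * α) * ∏ i, ballAvg k (g i) x := by
          rw [← ENNReal.tsum_mul_left]
          refine tsum_congr fun k => ?_
          rw [Finset.prod_mul_distrib]
          simp only [Finset.prod_const, Finset.card_univ, Fintype.card_fin]
          ring
        rw [hfac]
        ring

/-- The Hedberg-type summation: the geometric series changes regime where `2 ^ (-k n)` crosses
`h`. -/
theorem hedberg_sum (hn : 0 < n) {α δ₀ δ β : ℝ} (hα : 0 < α) (hδ₀ : 0 < δ₀) (hδ : δ₀ ≤ δ)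
    (hβ : β = δ + α / n) (h : ℝ≥0∞) :
    ∑' k : ℤ, twoPow (k * α) * min h (twoPow (-(k * n))) ^ β ≤
      twoPow (min α (n * δ₀)) * geomZ (min α (n * δ₀)) * h ^ δ := by
  have hn' : (0 : ℝ) < n := by exact_mod_cast hn
  have hδp : 0 < δ := by linarith
  have hβ0 : 0 < β := by rw [hβ]; positivity
  set c := min α (n * δ₀) with hc
  have hc0 : 0 < c := lt_min hα (by positivity)
  have hcα : c ≤ α := min_le_left _ _
  have hcδ : c ≤ n * δ := (min_le_right _ _).trans (by gcongr)
  rcases eq_or_ne h 0 with h0 | h0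
  · simp [h0, ENNReal.zero_rpow_of_pos hβ0]
  rcases eq_or_ne h ∞ with ht | ht
  · rw [ht, ENNReal.top_rpow_of_pos (by linarith), ENNReal.mul_top]
    · exact le_top
    · refine mul_ne_zero (twoPow_ne_zero _) fun hz => ?_
      exact twoPow_ne_zero _ (ENNReal.tsum_eq_zero.1 hz 0)
  have hv0 : h ^ ((n : ℝ)⁻¹) ≠ 0 :=
    (ENNReal.rpow_pos (pos_iff_ne_zero.2 h0) ht).ne'
  have hvt : h ^ ((n : ℝ)⁻¹) ≠ ∞ := ENNReal.rpow_ne_top_of_nonneg (by positivity) ht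
  obtain ⟨j, hj1, hj2⟩ := exists_twoPow_lt_le hv0 hvt
  have hup : h ^ (α / n) ≤ twoPow ((j + 1) * α) := by
    rw [← twoPow_rpow, show α / n = (n : ℝ)⁻¹ * α by field_simp, ENNReal.rpow_mul]
    exact ENNReal.rpow_le_rpow hj2 hα.le
  have hlow : twoPow (j * (n * δ)) ≤ h ^ δ := by
    have : h ^ δ = (h ^ ((n : ℝ)⁻¹)) ^ (n * δ) := by
      rw [← ENNReal.rpow_mul]; congr 1; field_simp
    rw [this, ← twoPow_rpow]
    exact ENNReal.rpow_le_rpow hj1.le (mul_nonneg hn'.le (by linarith))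
  refine (tsum_le_geomZ (c := c) (X := twoPow c * h ^ δ) (-(j + 1)) fun k => ?_).trans
    (le_of_eq (by ring))
  rcases le_or_gt k (-(j + 1)) with hk | hk
  · have hkR : (k : ℝ) ≤ -(j + 1) := by exact_mod_cast hk
    have habs : |(k : ℝ) - ((-(j + 1) : ℤ) : ℝ)| = -(j + 1) - k := by
      push_cast; rw [abs_of_nonpos (by linarith)]; ring
    rw [habs]
    calc twoPow (k * α) * min h (twoPow (-(k * n))) ^ β ≤ twoPow (k * α) * h ^ β := by
          gcongr; exact min_le_left _ _
      _ = twoPow (k * α) * (h ^ (α / n) * h ^ δ) := by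
          rw [← ENNReal.rpow_add _ _ h0 ht, hβ, add_comm]
      _ ≤ twoPow (k * α) * (twoPow ((j + 1) * α) * h ^ δ) := by gcongr
      _ = h ^ δ * twoPow (k * α + (j + 1) * α) := by rw [twoPow_add]; ring
      _ ≤ h ^ δ * twoPow (c + -(c * (-(j + 1) - k))) := by
          gcongr
          refine twoPow_mono ?_
          nlinarith
      _ = _ := by rw [twoPow_add]; ring
  · have hkR : -((j : ℝ) + 1) + 1 ≤ k := by exact_mod_cast hk
    have habs : |(k : ℝ) - ((-(j + 1) : ℤ) : ℝ)| = k + (j + 1) := by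
      push_cast; rw [abs_of_nonneg (by linarith)]; ring
    rw [habs]
    calc twoPow (k * α) * min h (twoPow (-(k * n))) ^ β
        ≤ twoPow (k * α) * twoPow (-(k * n)) ^ β := by gcongr; exact min_le_right _ _
      _ = twoPow (j * (n * δ)) * twoPow (-((k + j) * (n * δ))) := by
          rw [twoPow_rpow, ← twoPow_add, ← twoPow_add]
          congr 1
          rw [hβ]; field_simp; ring
      _ ≤ h ^ δ * twoPow (c + -(c * (k + (j + 1)))) := by
          refine mul_le_mul' hlow (twoPow_mono ?_)
          nlinarith
      _ = _ := by rw [twoPow_add]; ring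

end

/-! ### The modular estimate -/

theorem prod_rpow_exponent {m : ℕ} (x : ℝ≥0∞) (c : Fin m → ℝ) (hc : ∀ i, 0 ≤ c i) :
    ∏ i, x ^ c i = x ^ ∑ i, c i := by
  have : ∀ t : Finset (Fin m), ∏ i ∈ t, x ^ c i = x ^ ∑ i ∈ t, c i := by
    intro t
    induction t using Finset.induction_on with
    | empty => simp
    | insert a t ha ih =>
      rw [Finset.prod_insert ha, Finset.sum_insert ha, ih,
        ENNReal.rpow_add_of_nonneg _ _ (hc a) (Finset.sum_nonneg fun i _ => hc i)]
  exact this _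

theorem prod_le_min_rpow {m : ℕ} {v w : Fin m → ℝ≥0∞} {C h P : ℝ≥0∞} {e : Fin m → ℝ}
    (he : ∀ i, 0 ≤ e i) (hv : ∀ i, v i ≤ C * min (w i) P ^ e i) (hw : ∀ i, w i ≤ h) :
    ∏ i, v i ≤ C ^ m * min h P ^ ∑ i, e i := by
  calc ∏ i, v i ≤ ∏ i, C * min h P ^ e i := by
        refine Finset.prod_le_prod' fun i _ => (hv i).trans ?_
        exact mul_le_mul' le_rfl (ENNReal.rpow_le_rpow (min_le_min (hw i) le_rfl) (he i))
    _ = _ := by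
        rw [Finset.prod_mul_distrib, prod_rpow_exponent _ _ he]
        simp

/-- Small scales are summed with the exponents at the point, large scales with those at infinity. -/
theorem tsum_scales_le (hn : 0 < n) {m : ℕ} {α δ₀ : ℝ} (hα : 0 < α) (hδ₀ : 0 < δ₀)
    {v : ℤ → Fin m → ℝ≥0∞} {w : Fin m → ℝ≥0∞} {C h : ℝ≥0∞} {e eInf : Fin m → ℝ}
    (he : ∀ i, 0 ≤ e i) (heInf : ∀ i, 0 ≤ eInf i)
    (hδ : δ₀ ≤ ∑ i, e i - α / n) (hδInf : δ₀ ≤ ∑ i, eInf i - α / n)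
    (hneg : ∀ k i, k ≤ 0 → v k i ≤ C * min (w i) (twoPow (-(k * n))) ^ e i)
    (hpos : ∀ k i, 0 ≤ k → v k i ≤ C * min (w i) (twoPow (-(k * n))) ^ eInf i)
    (hw : ∀ i, w i ≤ h) :
    ∑' k : ℤ, twoPow (k * α) * ∏ i, v k i ≤
      C ^ m * (twoPow (min α (n * δ₀)) * geomZ (min α (n * δ₀))) *
        (h ^ (∑ i, e i - α / n) + min h 1 ^ (∑ i, eInf i - α / n)) := by
  have hterm : ∀ k : ℤ, twoPow (k * α) * ∏ i, v k i ≤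
      C ^ m * (twoPow (k * α) * min h (twoPow (-(k * n))) ^ (∑ i, e i)) +
      C ^ m * (twoPow (k * α) * min (min h 1) (twoPow (-(k * n))) ^ (∑ i, eInf i)) := by
    intro k
    rcases le_total k 0 with hk | hk
    · refine le_trans ?_ le_self_add
      refine (mul_le_mul' le_rfl (prod_le_min_rpow he (fun i => hneg k i hk) hw)).trans_eq ?_
      ring
    · refine le_trans ?_ le_add_self
      have hP : twoPow (-(k * n)) ≤ 1 := by
        refine twoPow_le_one ?_
        have : (0 : ℝ) ≤ k := by exact_mod_cast hk
        have : (0 : ℝ) ≤ k * n := by positivity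
        linarith
      rw [min_assoc, min_eq_right hP]
      refine (mul_le_mul' le_rfl (prod_le_min_rpow heInf (fun i => hpos k i hk) hw)).trans_eq ?_
      ring
  refine (ENNReal.tsum_le_tsum hterm).trans ?_
  rw [ENNReal.tsum_add, ENNReal.tsum_mul_left, ENNReal.tsum_mul_left]
  have e1 := hedberg_sum hn hα hδ₀ hδ (β := ∑ i, e i) (by ring) h
  have e2 := hedberg_sum hn hα hδ₀ hδInf (β := ∑ i, eInf i) (by ring) (min h 1)
  refine (add_le_add (mul_le_mul' le_rfl e1) (mul_le_mul' le_rfl e2)).trans_eq ?_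
  ring

theorem rpow_mul_add_le {A a b : ℝ≥0∞} {s B : ℝ} (hA : 1 ≤ A) (hs : 0 < s) (hB : s ≤ B) :
    (A * (a + b)) ^ s ≤ (2 * A) ^ B * (a ^ s + b ^ s) := by
  have h1 : A * (a + b) ≤ 2 * A * max a b := by
    calc A * (a + b) ≤ A * (max a b + max a b) := by
          gcongr
          · exact le_max_left _ _
          · exact le_max_right _ _
      _ = _ := by ring
  have h2 : (1 : ℝ≥0∞) ≤ 2 * A := by
    calc (1 : ℝ≥0∞) = 1 * 1 := by simp
      _ ≤ 2 * A := mul_le_mul' one_le_two hA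
  calc (A * (a + b)) ^ s ≤ (2 * A * max a b) ^ s := ENNReal.rpow_le_rpow h1 hs.le
    _ = (2 * A) ^ s * max a b ^ s := ENNReal.mul_rpow_of_nonneg _ _ hs.le
    _ ≤ (2 * A) ^ B * (a ^ s + b ^ s) := by
        refine mul_le_mul' (ENNReal.rpow_le_rpow_of_exponent_le h2 hB) ?_
        rcases le_total a b with h | h
        · rw [max_eq_right h]; exact le_add_self
        · rw [max_eq_left h]; exact le_self_add

/-- The exponent `∑ 1 / pInf i - α / n` plays the role of `1 / s` at infinity: it is bounded below
by `1 / B`, and `1 / s` tends to it at the logarithmic rate. -/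
theorem limit_exponent (hn : 0 < n) {m : ℕ} {α B : ℝ}
    {r : Fin m → Eu n → ℝ} {s : Eu n → ℝ} (hs : ∀ x, 1 / s x = (∑ i, 1 / r i x) - α / n)
    (hs0 : ∀ x, 0 < s x) (hB : ∀ x, s x ≤ B) {q pInf Bd L : Fin m → ℝ}
    (hr : ∀ i, ExpData (r i) (q i) (pInf i) (Bd i) (L i))
    (hlim : ∀ i, Tendsto (fun k => r i (axisPt hn k)) atTop (nhds (pInf i))) :
    B⁻¹ ≤ ∑ i, (pInf i)⁻¹ - α / n ∧
      ∀ x, |s x * (∑ i, (pInf i)⁻¹ - α / n) - 1| * Real.log (Real.exp 1 + ‖x‖) ≤ B * ∑ i, L i := by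
  have hp1 : ∀ i, 1 < pInf i := fun i => (hr i).one_lt.trans_le (hr i).q_le_inf
  have hr1 : ∀ i x, 1 < r i x := fun i x => (hr i).one_lt.trans_le ((hr i).q_le x)
  constructor
  · have ht : Tendsto (fun k => ∑ i, (r i (axisPt hn k))⁻¹ - α / n) atTop
        (nhds (∑ i, (pInf i)⁻¹ - α / n)) := by
      refine Tendsto.sub_const (tendsto_finsetSum _ fun i _ => ?_) _
      exact (hlim i).inv₀ (by linarith [hp1 i])
    refine ge_of_tendsto' ht fun k => ?_
    have := hs (axisPt hn k)
    simp only [one_div] at this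
    rw [← this]
    exact inv_anti₀ (hs0 _) (hB _)
  · intro x
    have hlog : 0 < Real.log (Real.exp 1 + ‖x‖) :=
      Real.log_pos (by linarith [Real.add_one_lt_exp (one_ne_zero (α := ℝ)), norm_nonneg x])
    have h1 : s x * (∑ i, (pInf i)⁻¹ - α / n) - 1 = s x * ∑ i, ((pInf i)⁻¹ - (r i x)⁻¹) := by
      have h2 := hs x
      simp only [one_div] at h2
      have h3 : s x * (s x)⁻¹ = 1 := mul_inv_cancel₀ (hs0 x).ne'
      rw [Finset.sum_sub_distrib]
      have : ∑ i, (r i x)⁻¹ = (s x)⁻¹ + α / n := by linarith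
      rw [this]
      linear_combination h3
    have h4 : ∀ i, |(pInf i)⁻¹ - (r i x)⁻¹| ≤ |r i x - pInf i| := by
      intro i
      have a1 := hp1 i
      have a2 := hr1 i x
      have : (pInf i)⁻¹ - (r i x)⁻¹ = (r i x - pInf i) / (pInf i * r i x) := by
        have : pInf i ≠ 0 := by linarith
        have : r i x ≠ 0 := by linarith
        field_simp
      rw [this, abs_div]
      refine div_le_self (abs_nonneg _) ?_
      rw [abs_of_pos (by positivity)]
      nlinarith
    have h5 : |∑ i, ((pInf i)⁻¹ - (r i x)⁻¹)| * Real.log (Real.exp 1 + ‖x‖) ≤ ∑ i, L i := by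
      calc _ ≤ (∑ i, |r i x - pInf i|) * Real.log (Real.exp 1 + ‖x‖) := by
            gcongr
            exact (Finset.abs_sum_le_sum_abs _ _).trans (Finset.sum_le_sum fun i _ => h4 i)
        _ = ∑ i, |r i x - pInf i| * Real.log (Real.exp 1 + ‖x‖) := Finset.sum_mul _ _ _
        _ ≤ _ := Finset.sum_le_sum fun i _ => (hr i).inf x
    rw [h1, abs_mul, abs_of_pos (hs0 x), mul_assoc]
    exact mul_le_mul (hB x) h5 (by positivity) ((hs0 x).le.trans (hB x))

theorem inv_natCast_le_exponent {m : ℕ} (hm : 0 < m) {α : ℝ} (hα : 0 < α)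
    {r : Fin m → Eu n → ℝ} {s : Eu n → ℝ} (hs : ∀ x, 1 / s x = (∑ i, 1 / r i x) - α / n)
    (hs0 : ∀ x, 0 < s x) (hr1 : ∀ i x, 1 < r i x) (x : Eu n) : (m : ℝ)⁻¹ ≤ s x := by
  have hsum : ∑ i, 1 / r i x ≤ m := by
    calc ∑ i, 1 / r i x ≤ ∑ _i : Fin m, (1 : ℝ) :=
          Finset.sum_le_sum fun i _ => by
            rw [div_le_one (by linarith [hr1 i x])]; exact (hr1 i x).le
      _ = m := by simp
  have h1 : 1 / s x ≤ m := by
    rw [hs x]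
    have : 0 ≤ α / n := by positivity
    linarith
  rw [inv_le_comm₀ (by exact_mod_cast hm) (hs0 x), ← one_div]
  exact h1

/-- The multilinear fractional integral of nonnegative functions, with values in `[0, ∞]`. -/
def potential {m : ℕ} (α : ℝ) (g : Fin m → Eu n → ℝ≥0∞) (x : Eu n) : ℝ≥0∞ :=
  ∫⁻ y : Fin m → Eu n, ENNReal.ofReal (Real.sqrt (∑ i, ‖x - y i‖ ^ 2) ^ (α - m * n)) *
    ∏ i, g i (y i)

/-- The potential maps the product of unit modular balls into a bounded modular ball. -/
theorem modular_potential_le {m : ℕ} (hn : 0 < n) (hm : 0 < m)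
    {α : ℝ} (hα : 0 < α) (hαmn : α < m * n) {r : Fin m → Eu n → ℝ}
    (hr : ∀ i, Measurable (r i) ∧ (∀ x, 1 < r i x) ∧ 1 < essInf (r i) volume ∧
      (∃ B : ℝ, ∀ x, r i x ≤ B) ∧ LogHolder (r i))
    {s : Eu n → ℝ} (hs : ∀ x, 1 / s x = (∑ i, 1 / r i x) - α / n)
    (hs0 : ∀ x, 0 < s x) {B : ℝ} (hB : ∀ x, s x ≤ B) :
    ∃ K : ℝ≥0∞, K ≠ ∞ ∧ 1 ≤ K ∧ ∀ g : Fin m → Eu n → ℝ≥0∞, (∀ i, Measurable (g i)) →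
      (∀ i, ∫⁻ y, g i y ^ r i y ≤ 1) → ∫⁻ x, potential α g x ^ s x ≤ K := by
  choose q pInf Bd L hE hlim using fun i => exists_expData hn (hr i)
  choose C hCt hC using fun i => exists_majorant hn (hE i)
  obtain ⟨hδB, hδL⟩ := limit_exponent hn hs hs0 hB hE hlim
  set δ := ∑ i, (pInf i)⁻¹ - α / n with hδ
  have hB0 : 0 < B := (hs0 0).trans_le (hB 0)
  have hδ0 : 0 < δ := (inv_pos.2 hB0).trans_le hδB
  have hm' : (0 : ℝ) < m := by exact_mod_cast hm
  set CS := ∑ i, C i with hCS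
  have hCSt : CS ≠ ∞ := ENNReal.sum_ne_top.2 fun i _ => hCt i
  set c := min α (n * B⁻¹) with hc
  have hn' : (0 : ℝ) < n := by exact_mod_cast hn
  have hc0 : 0 < c := lt_min hα (by positivity)
  set A := twoPow (m * n - α) * unitVol n ^ m * (CS ^ m * (twoPow c * geomZ c)) + 1 with hA
  have hAt : A ≠ ∞ := by
    refine ENNReal.add_ne_top.2 ⟨?_, ENNReal.one_ne_top⟩
    exact ENNReal.mul_ne_top
      (ENNReal.mul_ne_top (twoPow_ne_top _) (ENNReal.pow_ne_top unitVol_ne_top))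
      (ENNReal.mul_ne_top (ENNReal.pow_ne_top hCSt)
        (ENNReal.mul_ne_top (twoPow_ne_top _) (geomZ_ne_top hc0)))
  set K₃ := ENNReal.ofReal (Real.exp (B * (∑ i, L i) * ((n + 1) / (δ / m)))) with hK₃
  set D := ∫⁻ x : Eu n, decay x with hD
  refine ⟨(2 * A) ^ B * (CS + (K₃ * CS + D)) + 1, ?_, le_add_self, ?_⟩
  · refine ENNReal.add_ne_top.2 ⟨ENNReal.mul_ne_top ?_ ?_, ENNReal.one_ne_top⟩
    · exact ENNReal.rpow_ne_top_of_nonneg hB0.le (ENNReal.mul_ne_top ENNReal.ofNat_ne_top hAt)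
    · exact ENNReal.add_ne_top.2 ⟨hCSt, ENNReal.add_ne_top.2
        ⟨ENNReal.mul_ne_top ENNReal.ofReal_ne_top hCSt, lintegral_decay_ne_top⟩⟩
  intro g hg hg1
  choose H hHm hHi hHneg hHpos using fun i => hC i (g i) (hg i) (hg1 i)
  set S : Eu n → ℝ≥0∞ := fun x => ∑ i, H i x with hS
  have hSm : Measurable S := Finset.measurable_sum _ fun i _ => hHm i
  have hSi : ∫⁻ x, S x ≤ CS := by
    simp only [hS]
    rw [lintegral_finsetSum _ fun i _ => hHm i]
    exact Finset.sum_le_sum fun i _ => hHi i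
  have hCle : ∀ i, C i ≤ CS := fun i => Finset.single_le_sum (f := C) (by simp) (Finset.mem_univ i)
  have hr0 : ∀ i x, 0 ≤ (r i x)⁻¹ := fun i x =>
    inv_nonneg.2 (by linarith [(hr i).2.1 x])
  have hp0 : ∀ i, 0 ≤ (pInf i)⁻¹ := fun i =>
    inv_nonneg.2 (by linarith [(hE i).one_lt, (hE i).q_le_inf])
  have hpt : ∀ x, potential α g x ^ s x ≤ (2 * A) ^ B * (S x + (K₃ * S x + decay x)) := by
    intro x
    have hse : ∑ i, (r i x)⁻¹ - α / n = (s x)⁻¹ := by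
      have := hs x
      simp only [one_div] at this
      exact this.symm
    have hJ : potential α g x ≤ A * (S x ^ (s x)⁻¹ + min (S x) 1 ^ δ) := by
      refine (potential_le hαmn x g hg).trans ?_
      have := tsum_scales_le hn (m := m) (α := α) (δ₀ := B⁻¹) (C := CS) (h := S x)
        (v := fun k i => ballAvg k (g i) x) (w := fun i => H i x)
        (e := fun i => (r i x)⁻¹) (eInf := fun i => (pInf i)⁻¹) hα (inv_pos.2 hB0)
        (fun i => hr0 i x) hp0 (by rw [hse]; exact inv_anti₀ (hs0 x) (hB x)) hδB
        (fun k i hk => (hHneg i x k hk).trans (mul_le_mul' (hCle i) le_rfl))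
        (fun k i hk => (hHpos i x k hk).trans (mul_le_mul' (hCle i) le_rfl))
        (fun i => Finset.single_le_sum (f := fun i => H i x) (by simp) (Finset.mem_univ i))
      rw [hse] at this
      refine (mul_le_mul' le_rfl this).trans ?_
      rw [← mul_assoc]
      exact mul_le_mul' le_self_add le_rfl
    calc potential α g x ^ s x ≤ (A * (S x ^ (s x)⁻¹ + min (S x) 1 ^ δ)) ^ s x :=
          ENNReal.rpow_le_rpow hJ (hs0 x).le
      _ ≤ (2 * A) ^ B * ((S x ^ (s x)⁻¹) ^ s x + (min (S x) 1 ^ δ) ^ s x) :=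
          rpow_mul_add_le le_add_self (hs0 x) (hB x)
      _ ≤ _ := by
          refine mul_le_mul' le_rfl (add_le_add ?_ ?_)
          · rw [ENNReal.rpow_inv_rpow (hs0 x).ne']
          · rw [← ENNReal.rpow_mul, mul_comm δ]
            have hsm := inv_natCast_le_exponent hm hα hs hs0 (fun i x => (hr i).2.1 x) x
            refine (rpow_le_conv (x := x) (min_le_right (S x) 1) (e' := 1) (e₀ := δ / m)
              (by positivity) ?_ (hδL x)).trans ?_
            · rw [div_eq_inv_mul]; gcongr
            · rw [ENNReal.rpow_one]
              gcongr
              exact min_le_left _ _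
  calc ∫⁻ x, potential α g x ^ s x
      ≤ ∫⁻ x, (2 * A) ^ B * (S x + (K₃ * S x + decay x)) := lintegral_mono hpt
    _ = (2 * A) ^ B * ((∫⁻ x, S x) + (K₃ * (∫⁻ x, S x) + D)) := by
        have hm1 : Measurable fun x => S x + (K₃ * S x + decay x) :=
          hSm.add ((hSm.const_mul _).add measurable_decay)
        rw [lintegral_const_mul _ hm1,
          lintegral_add_left hSm, lintegral_add_left (hSm.const_mul _), lintegral_const_mul _ hSm]
    _ ≤ (2 * A) ^ B * (CS + (K₃ * CS + D)) := by gcongr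
    _ ≤ _ := le_self_add

/-! ### From modulars to norms -/

theorem ofReal_abs_Iα_le {m : ℕ} (α : ℝ) (f : Fin m → Eu n → ℝ) {l : Fin m → ℝ}
    (hl : ∀ i, 0 < l i) (x : Eu n) :
    ENNReal.ofReal |Iα α f x| ≤
      ENNReal.ofReal (∏ i, l i) * potential α (fun i y => ENNReal.ofReal (|f i y| / l i)) x := by
  rw [← Real.enorm_eq_ofReal_abs, Iα, potential,
    ← lintegral_const_mul' _ _ ENNReal.ofReal_ne_top]
  refine (enorm_integral_le_lintegral_enorm _).trans_eq (lintegral_congr fun y => ?_)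
  have hk : 0 ≤ Real.sqrt (∑ i, ‖x - y i‖ ^ 2) ^ (α - m * n) := by positivity
  have hprod : |∏ i, f i (y i)| = (∏ i, l i) * ∏ i, |f i (y i)| / l i := by
    rw [Finset.abs_prod, ← Finset.prod_mul_distrib]
    refine Finset.prod_congr rfl fun i _ => ?_
    have := (hl i).ne'
    field_simp
  have hl0 : 0 ≤ ∏ i, l i := Finset.prod_nonneg fun i _ => (hl i).le
  rw [Real.enorm_eq_ofReal_abs, abs_mul, abs_of_nonneg hk, hprod, ENNReal.ofReal_mul hk,
    ENNReal.ofReal_mul hl0, ENNReal.ofReal_prod_of_nonneg fun i _ =>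
      div_nonneg (abs_nonneg _) (hl i).le]
  ring

theorem vModular_Iα_le_one {m : ℕ} (hm : 0 < m) {α : ℝ} {r : Fin m → Eu n → ℝ} {s : Eu n → ℝ}
    (hr0 : ∀ i x, 0 < r i x) (hsm : ∀ x, (m : ℝ)⁻¹ ≤ s x) {K : ℝ≥0∞} (hKt : K ≠ ∞) (hK1 : 1 ≤ K)
    (hK : ∀ g : Fin m → Eu n → ℝ≥0∞, (∀ i, Measurable (g i)) →
      (∀ i, ∫⁻ y, g i y ^ r i y ≤ 1) → ∫⁻ x, potential α g x ^ s x ≤ K)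
    {f : Fin m → Eu n → ℝ} (hf : ∀ i, Measurable (f i)) {l : Fin m → ℝ} (hl : ∀ i, 0 < l i)
    (hfl : ∀ i, vModular (r i) (f i) (l i) ≤ 1) :
    vModular s (Iα α f) (K.toReal ^ m * ∏ i, l i) ≤ 1 := by
  have hm' : (0 : ℝ) < m := by exact_mod_cast hm
  have hs0 : ∀ x, 0 < s x := fun x => (inv_pos.2 hm').trans_le (hsm x)
  have hK0 : K ≠ 0 := (one_pos.trans_le hK1).ne'
  have hKr : 0 < K.toReal := ENNReal.toReal_pos hK0 hKt
  set g : Fin m → Eu n → ℝ≥0∞ := fun i y => ENNReal.ofReal (|f i y| / l i) with hg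
  have hgm : ∀ i, Measurable (g i) := fun i =>
    ENNReal.measurable_ofReal.comp ((hf i).abs.div_const _)
  have hg1 : ∀ i, ∫⁻ y, g i y ^ r i y ≤ 1 := by
    intro i
    refine le_trans (le_of_eq ?_) (hfl i)
    refine lintegral_congr fun y => ?_
    exact ENNReal.ofReal_rpow_of_nonneg (div_nonneg (abs_nonneg _) (hl i).le) (hr0 i y).le
  have hlp : 0 < ∏ i, l i := Finset.prod_pos fun i _ => hl i
  have hpt : ∀ x, ENNReal.ofReal ((|Iα α f x| / (K.toReal ^ m * ∏ i, l i)) ^ s x) ≤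
      K⁻¹ * potential α g x ^ s x := by
    intro x
    rw [← ENNReal.ofReal_rpow_of_nonneg (by positivity) (hs0 x).le]
    have h1 : ENNReal.ofReal (|Iα α f x| / (K.toReal ^ m * ∏ i, l i)) ≤
        (K ^ m)⁻¹ * potential α g x := by
      rw [ENNReal.ofReal_div_of_pos (by positivity), ENNReal.ofReal_mul (by positivity),
        ENNReal.ofReal_pow hKr.le, ENNReal.ofReal_toReal hKt]
      refine (ENNReal.div_le_div_right (ofReal_abs_Iα_le α f hl x) _).trans_eq ?_
      have hne : ENNReal.ofReal (∏ i, l i) ≠ 0 := by simpa using hlp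
      rw [div_eq_mul_inv, ENNReal.mul_inv (Or.inr ENNReal.ofReal_ne_top) (Or.inr hne),
        mul_comm (ENNReal.ofReal _), mul_assoc, mul_left_comm (ENNReal.ofReal _),
        ENNReal.mul_inv_cancel hne ENNReal.ofReal_ne_top, mul_one, mul_comm]
    refine (ENNReal.rpow_le_rpow h1 (hs0 x).le).trans ?_
    rw [ENNReal.mul_rpow_of_nonneg _ _ (hs0 x).le, ENNReal.inv_rpow]
    refine mul_le_mul' (ENNReal.inv_le_inv.2 ?_) le_rfl
    rw [← ENNReal.rpow_natCast, ← ENNReal.rpow_mul]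
    calc K = K ^ (1 : ℝ) := (ENNReal.rpow_one K).symm
      _ ≤ _ := by
        refine ENNReal.rpow_le_rpow_of_exponent_le hK1 ?_
        rw [← mul_inv_cancel₀ hm'.ne']
        exact mul_le_mul_of_nonneg_left (hsm x) hm'.le
  calc vModular s (Iα α f) (K.toReal ^ m * ∏ i, l i)
      ≤ ∫⁻ x, K⁻¹ * potential α g x ^ s x := lintegral_mono hpt
    _ = K⁻¹ * ∫⁻ x, potential α g x ^ s x :=
        lintegral_const_mul' _ _ (ENNReal.inv_ne_top.2 hK0)
    _ ≤ K⁻¹ * K := mul_le_mul' le_rfl (hK g hgm hg1)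
    _ = 1 := ENNReal.inv_mul_cancel hK0 hKt

/-- boundedness of the multilinear fractional integral on
variable Lebesgue spaces. -/
theorem stmt3 {n m : ℕ} (hn : 0 < n) (hm : 0 < m)
    (α : ℝ) (hα : 0 < α) (hαmn : α < m * n)
    (r : Fin m → Eu n → ℝ)
    (hr : ∀ i, Measurable (r i) ∧ (∀ x, 1 < r i x) ∧ 1 < essInf (r i) volume ∧
      (∃ B : ℝ, ∀ x, r i x ≤ B) ∧ LogHolder (r i))
    (s : Eu n → ℝ) (hs : ∀ x, 1 / s x = (∑ i, 1 / r i x) - α / n)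
    (hs0 : ∀ x, 0 < s x) (hsB : ∃ B : ℝ, ∀ x, s x ≤ B) :
    ∃ C : ℝ, 0 < C ∧ ∀ f : Fin m → Eu n → ℝ, (∀ i, MemVLp (r i) (f i)) →
      vLpNorm s (Iα α f) ≤ C * ∏ i, vLpNorm (r i) (f i) := by
  obtain ⟨B, hB⟩ := hsB
  obtain ⟨K, hKt, hK1, hK⟩ := modular_potential_le hn hm hα hαmn hr hs hs0 hB
  have hK0 : K ≠ 0 := (one_pos.trans_le hK1).ne'
  have hKr : 0 < K.toReal := ENNReal.toReal_pos hK0 hKt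
  have hr1 : ∀ i x, 1 < r i x := fun i x => (hr i).2.1 x
  refine ⟨K.toReal ^ m, by positivity, fun f hf => ?_⟩
  have hε : ∀ ε : ℝ, 0 < ε →
      vLpNorm s (Iα α f) ≤ K.toReal ^ m * ∏ i, (vLpNorm (r i) (f i) + ε) := by
    intro ε hε
    have hex : ∀ i, ∃ l : ℝ, (0 < l ∧ vModular (r i) (f i) l ≤ 1) ∧
        l < vLpNorm (r i) (f i) + ε := fun i =>
      exists_lt_of_csInf_lt (hf i).2 (lt_add_of_pos_right _ hε)
    choose l hl hlε using hex
    have hlp : 0 < ∏ i, l i := Finset.prod_pos fun i _ => (hl i).1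
    have hmod := vModular_Iα_le_one hm (fun i x => one_pos.trans (hr1 i x))
      (inv_natCast_le_exponent hm hα hs hs0 hr1) hKt hK1 hK (fun i => (hf i).1)
      (fun i => (hl i).1) (fun i => (hl i).2)
    have hbdd : BddBelow {l : ℝ | 0 < l ∧ vModular s (Iα α f) l ≤ 1} := ⟨0, fun _ h => h.1.le⟩
    refine (csInf_le hbdd ⟨by positivity, hmod⟩).trans ?_
    gcongr with i
    · exact fun i _ => (hl i).1.le
    · exact (hlε i).le
  have hcont : Continuous fun ε : ℝ => K.toReal ^ m * ∏ i, (vLpNorm (r i) (f i) + ε) := by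
    fun_prop
  have ht := (hcont.tendsto 0).mono_left (nhdsWithin_le_nhds (s := Ioi 0))
  simp only [add_zero] at ht
  exact ge_of_tendsto ht (eventually_mem_nhdsWithin.mono fun ε h => hε ε h)

end
end

section
/- Let m ≥ 1, 0 < α < n, and 1 < r₁ < ∞ be such that 1/s := 1/r₁ − α/n satisfies 0 < 1/s < 1. Then there is a constant C, independent of the cubes and functions below, such that for all cubes Q₁,…,Q_m ⊂ ℝⁿ and all measurable functions a₁,…,a_m with |a_i| ≤ χ_{Q_i} for each i, ‖I_α(a₁,…,a_m)‖_{L^s(ℝⁿ)} ≤ C |Q₁|^{1/r₁}. -/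
/-!
The bound follows from the pointwise estimate
`|I_α(a₁, …, a_m)(x)| ≲ R ^ n (R + |x - c|) ^ (α - n)`, where `B(c, R)` is a ball of radius
`R ∼ ℓ(Q₁)` containing `Q₁`; the other functions enter only through `|a_i| ≤ 1`.

Writing the kernel by the layer-cake formula as `ρ ^ (-γ) = γ ∫_ρ^∞ t ^ (-γ - 1) dt` with
`γ = m n - α` and `ρ = |(x - y₁, …, x - y_m)|`, and using `|x - y_i| ≤ ρ`, Tonelli bounds
`|I_α(a)(x)|` by an integral over scales `t` of volumes of boxes: `m - 1` factors `B(x, t)` and one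
factor `B(x, t) ∩ B(c, R)` (`enorm_Iα_le`). What remains is
`∫_0^∞ t ^ (α - n - 1) |B(x, t) ∩ B(c, R)| dt`, split at `t = (R + |x - c|) / 3`; the condition
`0 < α < n` makes both parts converge (`norm_Iα_le`).

The `L^s` norm of `(R + |x - c|) ^ (α - n)` is computed by scaling (`eLpNorm_model`); it is finite
because `1 / r₁ < 1` means `(n - α) s > n`, and the total power of `R` is `n / r₁`, which is
comparable to `|Q₁| ^ (1 / r₁)`.
-/

open MeasureTheory Filter Set
open scoped ENNReal BigOperators NNReal

noncomputable section

variable {n : ℕ}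

/-! ### Reduction to volumes of boxes -/

/-- One half of the layer-cake formula for a negative power. At `ρ = 0` the left side is the
junk value `0 ^ (-γ) = 0`, so the inequality still holds. -/
lemma ofReal_rpow_neg_le_lintegral {γ ρ : ℝ} (hγ : 0 < γ) (hρ : 0 ≤ ρ) :
    ENNReal.ofReal (ρ ^ (-γ)) ≤
      ENNReal.ofReal γ * ∫⁻ t in Ioi ρ, ENNReal.ofReal (t ^ (-γ - 1)) := by
  rcases hρ.eq_or_lt with h | h
  · subst h
    rw [Real.zero_rpow (by linarith)]
    simp
  · rw [← ofReal_integral_eq_lintegral_ofReal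
      (integrableOn_Ioi_rpow_of_lt (by linarith) h), integral_Ioi_rpow_of_lt (by linarith) h,
      ← ENNReal.ofReal_mul hγ.le]
    · apply le_of_eq
      congr 1
      rw [show -γ - 1 + 1 = -γ by ring]
      field_simp
    · filter_upwards [ae_restrict_mem measurableSet_Ioi] with t ht
      exact Real.rpow_nonneg (h.trans ht).le _

/-- The set of `y` with every `y i` within `t` of `x` and the coordinate `y i₀` in the closed ball
of centre `c` and radius `R`, as a box. -/
def layer {m : ℕ} (i₀ : Fin m) (x c : Eu n) (R t : ℝ) : Set (Fin m → Eu n) :=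
  Set.pi univ fun i => Metric.ball x t ∩ (if i = i₀ then Metric.closedBall c R else univ)

lemma measurableSet_layer_graph {m : ℕ} (i₀ : Fin m) (x c : Eu n) (R : ℝ) :
    MeasurableSet {p : (Fin m → Eu n) × ℝ | p.1 ∈ layer i₀ x c R p.2} := by
  have : {p : (Fin m → Eu n) × ℝ | p.1 ∈ layer i₀ x c R p.2} =
      ⋂ i, ({p | dist (p.1 i) x < p.2} ∩
        (fun p => p.1 i) ⁻¹' (if i = i₀ then Metric.closedBall c R else univ)) := by
    ext p
    simp [layer, Set.mem_pi]
  rw [this]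
  refine MeasurableSet.iInter fun i => MeasurableSet.inter ?_ ?_
  · exact measurableSet_lt (by fun_prop) (by fun_prop)
  · refine MeasurableSet.preimage ?_ (by fun_prop)
    split_ifs
    · exact Metric.isClosed_closedBall.measurableSet
    · exact MeasurableSet.univ

/-- Pointwise bound of `I_α` by an average over scales `t` of the volumes of the boxes `layer`. -/
lemma enorm_Iα_le {n m : ℕ} (i₀ : Fin m) (α : ℝ) (hγ : 0 < m * n - α)
    (a : Fin m → Eu n → ℝ) (c : Eu n) (R : ℝ) (ha1 : ∀ i x, |a i x| ≤ 1)
    (ha0 : ∀ x, x ∉ Metric.closedBall c R → a i₀ x = 0) (x : Eu n) :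
    ‖Iα α a x‖ₑ ≤ ENNReal.ofReal (m * n - α) *
      ∫⁻ t in Ioi (0 : ℝ), ENNReal.ofReal (t ^ (-(m * n - α) - 1)) *
        volume (layer i₀ x c R t) := by
  set γ : ℝ := m * n - α with hγdef
  set F : (Fin m → Eu n) → ℝ → ℝ≥0∞ := fun y t =>
    {p : (Fin m → Eu n) × ℝ | p.1 ∈ layer i₀ x c R p.2}.indicator
      (fun p => ENNReal.ofReal (p.2 ^ (-γ - 1))) (y, t) with hF
  have hFm : Measurable (Function.uncurry F) := by
    refine Measurable.indicator ?_ (measurableSet_layer_graph i₀ x c R)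
    fun_prop
  have key : ∀ y : Fin m → Eu n,
      ‖Real.sqrt (∑ i, ‖x - y i‖ ^ 2) ^ (α - m * n) * ∏ i, a i (y i)‖ₑ ≤
        ENNReal.ofReal γ * ∫⁻ t in Ioi (0 : ℝ), F y t := by
    intro y
    by_cases hy : y i₀ ∈ Metric.closedBall c R
    · set ρ := Real.sqrt (∑ i, ‖x - y i‖ ^ 2) with hρ
      have hρ0 : 0 ≤ ρ := Real.sqrt_nonneg _
      have hle : ∀ i, dist (y i) x ≤ ρ := by
        intro i
        rw [dist_comm, dist_eq_norm, hρ]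
        apply Real.le_sqrt_of_sq_le
        exact Finset.single_le_sum (f := fun i => ‖x - y i‖ ^ 2) (fun i _ => by positivity)
          (Finset.mem_univ i)
      have h1 : ‖ρ ^ (α - m * n) * ∏ i, a i (y i)‖ₑ ≤ ENNReal.ofReal (ρ ^ (-γ)) := by
        rw [← ofReal_norm]
        apply ENNReal.ofReal_le_ofReal
        rw [norm_mul, show α - m * n = -γ by rw [hγdef]; ring, Real.norm_eq_abs,
          abs_of_nonneg (Real.rpow_nonneg hρ0 _)]
        apply mul_le_of_le_one_right (Real.rpow_nonneg hρ0 _)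
        rw [norm_prod]
        exact Finset.prod_le_one (fun i _ => norm_nonneg _) (fun i _ => ha1 i _)
      refine h1.trans ((ofReal_rpow_neg_le_lintegral hγ hρ0).trans ?_)
      refine mul_le_mul_right ?_ _
      calc ∫⁻ t in Ioi ρ, ENNReal.ofReal (t ^ (-γ - 1)) = ∫⁻ t in Ioi ρ, F y t := by
            refine setLIntegral_congr_fun measurableSet_Ioi fun t ht => ?_
            have : (y, t) ∈ {p : (Fin m → Eu n) × ℝ | p.1 ∈ layer i₀ x c R p.2} := by
              simp only [layer, mem_ofPred_eq, Set.mem_pi]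
              intro i _
              refine ⟨(hle i).trans_lt ht, ?_⟩
              split_ifs with h
              · rw [h]; exact hy
              · trivial
            simp only [hF]
            rw [indicator_of_mem this]
        _ ≤ ∫⁻ t in Ioi (0 : ℝ), F y t := lintegral_mono_set (Ioi_subset_Ioi hρ0)
    · have : ∏ i, a i (y i) = 0 := Finset.prod_eq_zero (Finset.mem_univ i₀) (ha0 _ hy)
      rw [this]
      simp
  calc ‖Iα α a x‖ₑ ≤ ∫⁻ y : Fin m → Eu n,
        ‖Real.sqrt (∑ i, ‖x - y i‖ ^ 2) ^ (α - m * n) * ∏ i, a i (y i)‖ₑ :=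
        enorm_integral_le_lintegral_enorm _
    _ ≤ ∫⁻ y : Fin m → Eu n, ENNReal.ofReal γ * ∫⁻ t in Ioi (0 : ℝ), F y t := lintegral_mono key
    _ = ENNReal.ofReal γ * ∫⁻ y : Fin m → Eu n, ∫⁻ t in Ioi (0 : ℝ), F y t :=
        lintegral_const_mul' _ _ ENNReal.ofReal_ne_top
    _ = ENNReal.ofReal γ * ∫⁻ t in Ioi (0 : ℝ), ∫⁻ y : Fin m → Eu n, F y t := by
        rw [lintegral_lintegral_swap hFm.aemeasurable]
    _ = _ := by
        congr 1
        refine lintegral_congr fun t => ?_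
        have hm : MeasurableSet (layer i₀ x c R t) :=
          measurable_prodMk_right (y := t) (measurableSet_layer_graph i₀ x c R)
        rw [show (fun y => F y t) = (layer i₀ x c R t).indicator
          (fun _ => ENNReal.ofReal (t ^ (-γ - 1))) from rfl, lintegral_indicator_const hm]

/-! ### Volumes of the boxes and the integral over scales -/

/-- With `u = (R + ‖x - c‖) / 3`, a ball `B(x, t)` with `t < u` can meet the closed ball
`B(c, R)` only when `u ≤ R`; this gives the factor `(t / u) ^ n` at small scales. -/
lemma volume_ball_inter_le {n : ℕ} (hn : 0 < n) (x c : Eu n) {R t : ℝ} (hR : 0 < R)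
    (ht : 0 < t) :
    volume (Metric.ball x t ∩ Metric.closedBall c R) ≤
      ENNReal.ofReal ((volume (Metric.ball (0 : Eu n) 1)).toReal * R ^ n *
        (if t ≤ (R + ‖x - c‖) / 3 then t ^ n * (((R + ‖x - c‖) / 3) ^ n)⁻¹ else 1)) := by
  have : Nonempty (Fin n) := ⟨⟨0, hn⟩⟩
  set v := (volume (Metric.ball (0 : Eu n) 1)).toReal with hv
  have hv' : volume (Metric.ball (0 : Eu n) 1) = ENNReal.ofReal v :=
    (ENNReal.ofReal_toReal measure_ball_lt_top.ne).symm
  have hv0 : 0 ≤ v := ENNReal.toReal_nonneg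
  set u := (R + ‖x - c‖) / 3 with hu
  have hu0 : 0 < u := by positivity
  split_ifs with htu
  · by_cases huR : u ≤ R
    · calc volume (Metric.ball x t ∩ Metric.closedBall c R) ≤ volume (Metric.ball x t) :=
            measure_mono inter_subset_left
        _ = ENNReal.ofReal (t ^ n * v) := by
            rw [Measure.addHaar_ball _ _ ht.le, hv', ← ENNReal.ofReal_mul (by positivity)]
            simp
        _ ≤ _ := by
            apply ENNReal.ofReal_le_ofReal
            have : u ^ n ≤ R ^ n := by gcongr
            calc t ^ n * v = v * (u ^ n) * (t ^ n * (u ^ n)⁻¹) := by field_simp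
              _ ≤ _ := by gcongr
    · have : Metric.ball x t ∩ Metric.closedBall c R = ∅ := by
        rw [Set.eq_empty_iff_forall_notMem]
        rintro y ⟨h1, h2⟩
        rw [Metric.mem_ball] at h1
        rw [Metric.mem_closedBall] at h2
        have h3 := dist_triangle_left x c y
        rw [dist_eq_norm x c] at h3
        push Not at huR
        linarith
      rw [this]
      simp
  · calc volume (Metric.ball x t ∩ Metric.closedBall c R) ≤ volume (Metric.closedBall c R) :=
          measure_mono inter_subset_right
      _ = _ := by
          rw [Measure.addHaar_closedBall _ _ hR.le, hv', ← ENNReal.ofReal_mul (by positivity)]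
          simp [mul_comm]

lemma volume_layer_le {n m : ℕ} (hn : 0 < n) (i₀ : Fin m) (x c : Eu n) {R t : ℝ} (hR : 0 < R)
    (ht : 0 < t) :
    volume (layer i₀ x c R t) ≤
      ENNReal.ofReal ((volume (Metric.ball (0 : Eu n) 1)).toReal ^ m * R ^ n *
        (t ^ n) ^ (m - 1) *
        (if t ≤ (R + ‖x - c‖) / 3 then t ^ n * (((R + ‖x - c‖) / 3) ^ n)⁻¹ else 1)) := by
  have : Nonempty (Fin n) := ⟨⟨0, hn⟩⟩
  have hm : 0 < m := i₀.pos
  have h := volume_ball_inter_le hn x c hR ht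
  set v := (volume (Metric.ball (0 : Eu n) 1)).toReal with hv
  have hv' : volume (Metric.ball (0 : Eu n) 1) = ENNReal.ofReal v :=
    (ENNReal.ofReal_toReal measure_ball_lt_top.ne).symm
  have hv0 : 0 ≤ v := ENNReal.toReal_nonneg
  rw [layer, volume_pi_pi, ← Finset.mul_prod_erase _ _ (Finset.mem_univ i₀), if_pos rfl]
  have h2 : ∏ i ∈ Finset.univ.erase i₀, volume (Metric.ball x t ∩
      (if i = i₀ then Metric.closedBall c R else univ)) = ENNReal.ofReal (t ^ n * v) ^ (m - 1) := by
    rw [Finset.prod_congr rfl (g := fun _ => ENNReal.ofReal (t ^ n * v))]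
    · simp
    · intro i hi
      rw [if_neg (Finset.ne_of_mem_erase hi), inter_univ,
        Measure.addHaar_ball _ _ ht.le, hv', ← ENNReal.ofReal_mul (by positivity)]
      simp
  rw [h2, ← ENNReal.ofReal_pow (by positivity)]
  refine (mul_le_mul_left h _).trans (le_of_eq ?_)
  rw [← ENNReal.ofReal_mul (by positivity)]
  congr 1
  obtain ⟨k, rfl⟩ : ∃ k, m = k + 1 := ⟨m - 1, by omega⟩
  simp only [Nat.add_sub_cancel]
  ring

/-- The part `t ≤ u` converges because `α > 0` and the part `t > u` because `α < n`. -/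
lemma lintegral_scales_le {n : ℕ} {α u : ℝ} (hα : 0 < α) (hαn : α < n) (hu : 0 < u) :
    ∫⁻ t in Ioi (0 : ℝ), ENNReal.ofReal (t ^ (α - n - 1) *
        (if t ≤ u then t ^ n * (u ^ n)⁻¹ else 1)) ≤
      ENNReal.ofReal ((1 / α + 1 / (n - α)) * u ^ (α - n)) := by
  have hna : 0 < n - α := by linarith
  rw [← Ioc_union_Ioi_eq_Ioi hu.le, lintegral_union measurableSet_Ioi
    (Set.disjoint_left.2 fun t h1 h2 => not_lt.2 h1.2 h2)]
  have h1 : ∫⁻ t in Ioc 0 u, ENNReal.ofReal (t ^ (α - n - 1) *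
      (if t ≤ u then t ^ n * (u ^ n)⁻¹ else 1)) = ENNReal.ofReal (1 / α * u ^ (α - n)) := by
    have : ∀ t ∈ Ioc 0 u, ENNReal.ofReal (t ^ (α - n - 1) *
        (if t ≤ u then t ^ n * (u ^ n)⁻¹ else 1)) = ENNReal.ofReal ((u ^ n)⁻¹ * t ^ (α - 1)) := by
      intro t ht
      rw [if_pos ht.2, ← Real.rpow_natCast t n, ← mul_assoc, ← Real.rpow_add ht.1, mul_comm]
      congr 3
      ring
    have hi : IntegrableOn (fun t : ℝ => t ^ (α - 1)) (Ioc 0 u) :=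
      (intervalIntegrable_iff_integrableOn_Ioc_of_le hu.le).1
        (intervalIntegral.intervalIntegrable_rpow' (by linarith))
    rw [setLIntegral_congr_fun measurableSet_Ioc this,
      ← ofReal_integral_eq_lintegral_ofReal (hi.const_mul _)]
    · congr 1
      rw [integral_const_mul, ← intervalIntegral.integral_of_le hu.le,
        integral_rpow (Or.inl (by linarith)), sub_add_cancel, Real.zero_rpow hα.ne',
        Real.rpow_sub hu, Real.rpow_natCast]
      field_simp
      ring
    · filter_upwards [ae_restrict_mem measurableSet_Ioc] with t ht
      have := Real.rpow_nonneg ht.1.le (α - 1)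
      simp only [Pi.zero_apply]
      positivity
  have h2 : ∫⁻ t in Ioi u, ENNReal.ofReal (t ^ (α - n - 1) *
      (if t ≤ u then t ^ n * (u ^ n)⁻¹ else 1)) = ENNReal.ofReal (1 / (n - α) * u ^ (α - n)) := by
    have : ∀ t ∈ Ioi u, ENNReal.ofReal (t ^ (α - n - 1) *
        (if t ≤ u then t ^ n * (u ^ n)⁻¹ else 1)) = ENNReal.ofReal (t ^ (α - n - 1)) := by
      intro t ht
      rw [if_neg (not_le.2 ht), mul_one]
    rw [setLIntegral_congr_fun measurableSet_Ioi this,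
      ← ofReal_integral_eq_lintegral_ofReal (integrableOn_Ioi_rpow_of_lt (by linarith) hu)]
    · congr 1
      rw [integral_Ioi_rpow_of_lt (by linarith) hu, sub_add_cancel]
      rw [show α - n = -(n - α) by ring]
      field_simp
    · filter_upwards [ae_restrict_mem measurableSet_Ioi] with t ht
      exact Real.rpow_nonneg (hu.trans ht).le _
  rw [h1, h2, ← ENNReal.ofReal_add (by positivity) (by positivity)]
  apply le_of_eq
  congr 1
  ring

/-- The pointwise decay estimate: if the `i₀`-th function is supported in the closed ball
`B(c, R)`, then `|I_α(a)(x)| ≲ R ^ n (R + ‖x - c‖) ^ (α - n)`. -/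
lemma norm_Iα_le {n m : ℕ} (hn : 0 < n) (i₀ : Fin m) {α : ℝ} (hα : 0 < α) (hαn : α < n)
    (a : Fin m → Eu n → ℝ) (c : Eu n) {R : ℝ} (hR : 0 < R) (ha1 : ∀ i x, |a i x| ≤ 1)
    (ha0 : ∀ x, x ∉ Metric.closedBall c R → a i₀ x = 0) (x : Eu n) :
    ‖Iα α a x‖ ≤ (m * n - α) * ((volume (Metric.ball (0 : Eu n) 1)).toReal ^ m * R ^ n) *
      ((1 / α + 1 / (n - α)) * ((R + ‖x - c‖) / 3) ^ (α - n)) := by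
  have hm : 0 < m := i₀.pos
  have hna : 0 < n - α := by linarith
  have hγ : 0 < m * n - α := by
    have h1 : (1 : ℝ) ≤ m := by exact_mod_cast hm
    have h2 : (0 : ℝ) < n := by exact_mod_cast hn
    nlinarith
  have h := enorm_Iα_le i₀ α hγ a c R ha1 ha0 x
  set v := (volume (Metric.ball (0 : Eu n) 1)).toReal with hv
  have hv0 : 0 ≤ v := ENNReal.toReal_nonneg
  have hu : 0 < (R + ‖x - c‖) / 3 := by positivity
  set u := (R + ‖x - c‖) / 3 with hudef
  have hb : ‖Iα α a x‖ₑ ≤ ENNReal.ofReal ((m * n - α) * (v ^ m * R ^ n) *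
      ((1 / α + 1 / (n - α)) * u ^ (α - n))) := by
    refine h.trans ?_
    rw [mul_assoc, ENNReal.ofReal_mul hγ.le, ENNReal.ofReal_mul (by positivity)]
    gcongr
    refine le_trans ?_ (mul_le_mul_right (lintegral_scales_le hα hαn hu) _)
    rw [← lintegral_const_mul' _ _ ENNReal.ofReal_ne_top]
    refine setLIntegral_mono' measurableSet_Ioi fun t ht => ?_
    have ht : 0 < t := ht
    refine (mul_le_mul_right (volume_layer_le hn i₀ x c hR ht) _).trans (le_of_eq ?_)
    rw [← ENNReal.ofReal_mul (by positivity), ← ENNReal.ofReal_mul (by positivity)]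
    congr 1
    have e : t ^ (-(m * n - α) - 1) * (t ^ n) ^ (m - 1) = t ^ (α - n - 1) := by
      rw [← pow_mul, ← Real.rpow_natCast, ← Real.rpow_add ht]
      congr 1
      push_cast [Nat.cast_sub (show 1 ≤ m from hm)]
      ring
    rw [← e]
    ring
  rw [← ofReal_norm] at hb
  exact (ENNReal.ofReal_le_ofReal_iff (by positivity)).1 hb

/-! ### The `L^s` norm of the model function -/

/-- Scaling of the `L^s` norm of the model function `(R + ‖x - c‖) ^ (-β)`. -/
lemma eLpNorm_model {n : ℕ} {β s : ℝ} (hs : 0 < s) (hβ : n < β * s) (c : Eu n) {R A : ℝ}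
    (hR : 0 < R) (hA : 0 ≤ A) :
    eLpNorm (fun x : Eu n => A * (R + ‖x - c‖) ^ (-β)) (ENNReal.ofReal s) volume =
      ENNReal.ofReal (A * (∫ x : Eu n, (1 + ‖x‖) ^ (-(β * s))) ^ (1 / s) * R ^ (n / s - β)) := by
  have hi : Integrable (fun x : Eu n => (1 + ‖x‖) ^ (-(β * s))) :=
    integrable_one_add_norm (by simpa using hβ)
  set J := ∫ x : Eu n, (1 + ‖x‖) ^ (-(β * s)) with hJ
  have hJ0 : 0 ≤ J := integral_nonneg fun x => by positivity
  have hi2 : Integrable (fun x : Eu n => (1 + ‖R⁻¹ • (x - c)‖) ^ (-(β * s))) :=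
    (hi.comp_smul (inv_ne_zero hR.ne')).comp_sub_right c
  have hpt : ∀ x : Eu n, ‖A * (R + ‖x - c‖) ^ (-β)‖ₑ ^ s =
      ENNReal.ofReal (A ^ s * R ^ (-(β * s)) * (1 + ‖R⁻¹ • (x - c)‖) ^ (-(β * s))) := by
    intro x
    rw [Real.enorm_of_nonneg (by positivity), ENNReal.ofReal_rpow_of_nonneg (by positivity) hs.le]
    congr 1
    rw [Real.mul_rpow hA (by positivity), ← Real.rpow_mul (by positivity), mul_assoc,
      ← Real.mul_rpow hR.le (by positivity), norm_smul, norm_inv, Real.norm_of_nonneg hR.le]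
    congr 2
    · field_simp
    · ring
  rw [eLpNorm_eq_lintegral_rpow_enorm_toReal (by simpa using hs) ENNReal.ofReal_ne_top,
    ENNReal.toReal_ofReal hs.le]
  simp_rw [hpt]
  rw [← ofReal_integral_eq_lintegral_ofReal (hi2.const_mul _)
      (Eventually.of_forall fun x => by positivity), integral_const_mul,
    integral_sub_right_eq_self (fun x : Eu n => (1 + ‖R⁻¹ • x‖) ^ (-(β * s))) c,
    Measure.integral_comp_smul volume (fun x : Eu n => (1 + ‖x‖) ^ (-(β * s))) R⁻¹, ← hJ,
    ENNReal.ofReal_rpow_of_nonneg (by positivity) (by positivity)]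
  congr 1
  have e : |((R⁻¹) ^ Module.finrank ℝ (Eu n))⁻¹| = R ^ (n : ℝ) := by
    simp [abs_of_pos hR]
  rw [e, smul_eq_mul, Real.mul_rpow (by positivity) (by positivity),
    Real.mul_rpow (by positivity) (by positivity), Real.mul_rpow (by positivity) hJ0,
    ← Real.rpow_mul hA, ← Real.rpow_mul hR.le, ← Real.rpow_mul hR.le,
    mul_one_div_cancel hs.ne', Real.rpow_one,
    show (n : ℝ) / s - β = -(β * s) * (1 / s) + n * (1 / s) by field_simp; ring,
    Real.rpow_add hR]
  ring

/-! ### Comparison of cubes and balls -/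

lemma cube_subset_closedBall {n : ℕ} (z : Eu n) {l : ℝ} (hl : 0 < l) :
    cube z l ⊆ Metric.closedBall z (Real.sqrt n * l) := by
  intro x hx
  rw [Metric.mem_closedBall, dist_eq_norm, EuclideanSpace.norm_eq]
  apply Real.sqrt_le_iff.2 ⟨by positivity, ?_⟩
  rw [mul_pow, Real.sq_sqrt (by positivity)]
  calc ∑ i, ‖(x - z) i‖ ^ 2 ≤ ∑ _i : Fin n, l ^ 2 := by
        refine Finset.sum_le_sum fun i _ => ?_
        have := hx i
        gcongr
        simp only [PiLp.sub_apply, Real.norm_eq_abs]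
        linarith
    _ = _ := by simp

lemma le_volume_cube {n : ℕ} (hn : 0 < n) (z : Eu n) {l : ℝ} (hl : 0 < l) :
    (l / 2) ^ n * (volume (Metric.ball (0 : Eu n) 1)).toReal ≤ (volume (cube z l)).toReal := by
  have : Nonempty (Fin n) := ⟨⟨0, hn⟩⟩
  have hsub : Metric.ball z (l / 2) ⊆ cube z l := by
    intro x hx i
    rw [Metric.mem_ball, dist_eq_norm] at hx
    have := PiLp.norm_apply_le (x - z) i
    simp only [PiLp.sub_apply, Real.norm_eq_abs] at this
    linarith
  have hfin : volume (cube z l) ≠ ⊤ :=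
    measure_ne_top_of_subset (cube_subset_closedBall z hl) measure_closedBall_lt_top.ne
  have := ENNReal.toReal_mono hfin (measure_mono hsub)
  rwa [Measure.addHaar_ball _ _ (by positivity), ENNReal.toReal_mul,
    ENNReal.toReal_ofReal (by positivity), finrank_euclideanSpace_fin] at this

/-- uniform `L^s` estimate for `I_α` acting on atoms,
i.e. functions dominated by characteristic functions of cubes. -/
theorem stmt7 {n m : ℕ} (hn : 0 < n) (hm : 0 < m)
    (α : ℝ) (hα : 0 < α) (hαn : α < n)
    (r₁ s : ℝ) (hr₁ : 1 < r₁)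
    (hs : 1 / s = 1 / r₁ - α / n) (hs0 : 0 < 1 / s) (hs1 : 1 / s < 1) :
    ∃ C : ℝ, 0 < C ∧
      ∀ (z : Fin m → Eu n) (l : Fin m → ℝ) (a : Fin m → Eu n → ℝ),
        (∀ i, 0 < l i) → (∀ i, Measurable (a i)) →
        (∀ i x, |a i x| ≤ (cube (z i) (l i)).indicator 1 x) →
        eLpNorm (Iα α a) (ENNReal.ofReal s) volume ≤
          ENNReal.ofReal (C * (volume (cube (z ⟨0, hm⟩) (l ⟨0, hm⟩))).toReal ^ (1 / r₁)) := by
  have hn' : (0 : ℝ) < n := by exact_mod_cast hn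
  have hs_pos : 0 < s := one_div_pos.1 hs0
  have hr_pos : 0 < r₁ := by linarith
  set v := (volume (Metric.ball (0 : Eu n) 1)).toReal with hv
  have hv0 : 0 < v := ENNReal.toReal_pos (Metric.measure_ball_pos _ _ one_pos).ne'
    measure_ball_lt_top.ne
  have hna : 0 < n - α := by linarith
  have hγ : 0 < m * n - α := by
    have h1 : (1 : ℝ) ≤ m := by exact_mod_cast hm
    nlinarith
  -- Since `1 / s + α / n = 1 / r₁ < 1`, the model function lies in `L^s`.
  have hβ : n < (n - α) * s := by
    have h1 : 1 / r₁ < 1 := by rw [div_lt_one hr_pos]; exact hr₁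
    have h2 : 1 / s + α / n < 1 := by linarith
    rw [div_add_div _ _ hs_pos.ne' hn'.ne', div_lt_one (by positivity)] at h2
    nlinarith
  set J := ∫ x : Eu n, (1 + ‖x‖) ^ (-((n - α) * s)) with hJ
  have hJ0 : 0 ≤ J := integral_nonneg fun x => by positivity
  set K : ℝ := (m * n - α) * v ^ m * (1 / α + 1 / (n - α)) * 3 ^ (n - α) with hK
  have hK0 : 0 < K := by positivity
  refine ⟨max 1 (K * J ^ (1 / s) * ((2 * Real.sqrt n) ^ n / v) ^ (1 / r₁)), by positivity, ?_⟩
  intro z l a hl _ ha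
  set z₀ := z ⟨0, hm⟩
  set l₀ := l ⟨0, hm⟩ with hl₀
  have hl0 : 0 < l₀ := hl _
  set R := Real.sqrt n * l₀ with hRdef
  have hR : 0 < R := by positivity
  have ha1 : ∀ i x, |a i x| ≤ 1 := fun i x =>
    (ha i x).trans (indicator_apply_le' (fun _ => le_rfl) (fun _ => zero_le_one))
  have ha0 : ∀ x, x ∉ Metric.closedBall z₀ R → a ⟨0, hm⟩ x = 0 := by
    intro x hx
    have h := ha ⟨0, hm⟩ x
    rw [indicator_of_notMem (fun h' => hx (cube_subset_closedBall z₀ hl0 h'))] at h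
    exact abs_nonpos_iff.1 h
  have hpt : ∀ x, ‖Iα α a x‖ ≤ K * R ^ n * (R + ‖x - z₀‖) ^ (-(n - α)) := by
    intro x
    refine (norm_Iα_le hn ⟨0, hm⟩ hα hαn a z₀ hR ha1 ha0 x).trans (le_of_eq ?_)
    rw [show α - n = -(n - α) by ring, Real.div_rpow (by positivity) (by norm_num),
      Real.rpow_neg (by norm_num : (0 : ℝ) ≤ 3), div_inv_eq_mul, hK]
    ring
  refine (eLpNorm_mono_real hpt).trans ?_
  rw [eLpNorm_model hs_pos hβ z₀ hR (by positivity), ← hJ]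
  apply ENNReal.ofReal_le_ofReal
  have e1 : R ^ n * R ^ (n / s - (n - α)) = (R ^ n) ^ (1 / r₁) := by
    rw [← Real.rpow_natCast, ← Real.rpow_add hR, ← Real.rpow_mul hR.le]
    congr 1
    rw [show 1 / r₁ = 1 / s + α / n by linarith]
    field_simp
    ring
  have e2 : R ^ n ≤ (2 * Real.sqrt n) ^ n / v * (volume (cube z₀ l₀)).toReal := by
    calc R ^ n = (2 * Real.sqrt n) ^ n / v * ((l₀ / 2) ^ n * v) := by
          rw [show R = (2 * Real.sqrt n) * (l₀ / 2) by rw [hRdef]; ring, mul_pow]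
          field_simp
      _ ≤ _ := by
          gcongr
          exact le_volume_cube hn z₀ hl0
  calc K * R ^ n * J ^ (1 / s) * R ^ (n / s - (n - α))
      = K * J ^ (1 / s) * (R ^ n) ^ (1 / r₁) := by rw [← e1]; ring
    _ ≤ K * J ^ (1 / s) *
        ((2 * Real.sqrt n) ^ n / v * (volume (cube z₀ l₀)).toReal) ^ (1 / r₁) := by gcongr
    _ = K * J ^ (1 / s) * ((2 * Real.sqrt n) ^ n / v) ^ (1 / r₁) *
        (volume (cube z₀ l₀)).toReal ^ (1 / r₁) := by
          rw [Real.mul_rpow (by positivity) ENNReal.toReal_nonneg]; ring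
    _ ≤ _ := by
          gcongr
          exact le_max_right _ _

end
end
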